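/- Fix masses m₁, m₂, m₃ > 0 and μ₁ > 0. Then there exist ε > 0 and functions q₁, q₂, q₃, q₄ : (0, ε) → ℝ with the asymptotic behaviour q₁(μ₂)/(κμ₁²u(μ₂)²) → 1, q₄(μ₂)/(κμ₁²) → 1, q₂(μ₂) = O(u(μ₂)¹⁰), q₃(μ₂) = O(u(μ₂)¹²) as μ₂ → 0⁺ (where κ = M_tot/(m₁²(m₂+m₃)²) and u(μ₂) = (μ₂/μ₁)/(m₂m₃√(κ/(m₂+m₃)))), such that for every μ₂ ∈ (0, ε) the point with positions (q₁(μ₂), q₂(μ₂), q₃(μ₂), q₄(μ₂)) and zero momenta is a critical point of the fully reduced Hamiltonian H with parameters (μ₁, μ₂) and moreover a strict local minimum of H. In particular, the corresponding relative equilibrium of the three-body problem in ℝ⁴ is Lyapunov stable. -/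

import Mathlib

noncomputable section

/-- `f(q_i, q_j, L₃) = ((L_d + L_s)²q_i² + (L_d − L_s)²q_j²)/(16A²)`,
with `L_d = √(Δ² − L₃²)`, `L_s = √(Σ² − L₃²)`, `Δ = μ₁ − μ₂`, `Σ = μ₁ + μ₂`. -/
def fred (μ₁ μ₂ A qi qj L₃ : ℝ) : ℝ :=
  let Ld := Real.sqrt ((μ₁ - μ₂) ^ 2 - L₃ ^ 2)
  let Ls := Real.sqrt ((μ₁ + μ₂) ^ 2 - L₃ ^ 2)
  ((Ld + Ls) ^ 2 * qi ^ 2 + (Ld - Ls) ^ 2 * qj ^ 2) / (16 * A ^ 2)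

/-- The fully reduced Hamiltonian of the three-body problem in `ℝ⁴` on the phase space
`ℝ⁴ × ℝ⁴` (positions `q`, momenta `p`). -/
def Hred (ν₁ ν₂ μ₁ μ₂ : ℝ) (V : (Fin 3 → ℝ) → ℝ) (z : (Fin 4 → ℝ) × (Fin 4 → ℝ)) : ℝ :=
  let q := z.1; let p := z.2
  let A := (q 0 * q 3 - q 1 * q 2) / 2
  let L₃ := q 0 * p 1 - q 1 * p 0 + q 2 * p 3 - q 3 * p 2
  (1 / (2 * ν₁)) * (p 0 ^ 2 + p 1 ^ 2 + fred μ₁ μ₂ A (q 2) (q 3) L₃) +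
    (1 / (2 * ν₂)) * (p 2 ^ 2 + p 3 ^ 2 + fred μ₁ μ₂ A (q 0) (q 1) L₃) +
    V ![q 0 ^ 2 + q 1 ^ 2, q 2 ^ 2 + q 3 ^ 2, q 0 * q 2 + q 1 * q 3]

/-- The Newtonian potential of the three-body problem in the translation-reduced
variables: `V(s₁,s₂,s₃) = −m₂m₃/√s₁ − m₃m₁/√(a₂²s₁+s₂+2a₂s₃) − m₁m₂/√(a₃²s₁+s₂−2a₃s₃)`
with `a₂ = m₂/(m₂+m₃)`, `a₃ = m₃/(m₂+m₃)`. -/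
def Vnewt (m₁ m₂ m₃ : ℝ) (s : Fin 3 → ℝ) : ℝ :=
  -(m₂ * m₃ / Real.sqrt (s 0)) -
    m₃ * m₁ / Real.sqrt ((m₂ / (m₂ + m₃)) ^ 2 * s 0 + s 1 + 2 * (m₂ / (m₂ + m₃)) * s 2) -
    m₁ * m₂ / Real.sqrt ((m₃ / (m₂ + m₃)) ^ 2 * s 0 + s 1 - 2 * (m₃ / (m₂ + m₃)) * s 2)

open Filter Topology Asymptotics

/-! Near zero momentum `H` is at least the effective potential plus the kinetic energy, as soon as
the Gram matrix of the two separation vectors `x` and `y` is dominated by its `(2, 2)` entry; so a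
strict minimum of the effective potential is enough. The latter splits into a function of the shape
(the two lengths and the angle) and a nonnegative term that vanishes exactly when the Gram matrix is
diagonal, which fixes the rotation.

In the inverse lengths `X` and `Y`, and with `T` equal to `X` times the cotangent of the angle, the
function of the shape becomes two decoupled circular Kepler problems perturbed by `w ^ 2 * Ψ`, where
`w = u ^ 2`:
`((X - 1) ^ 2 + T ^ 2) / 2 + σ * w * (Y - 1) ^ 2 / 2 + w ^ 2 * Ψ (w, X, Y, T)`.
The well is steeper than the perturbation, so a strict minimum persists near `(1, 1, 0)`. The part
of `Ψ` odd in `T` is of order `w ^ 2 * T`: the dipole terms of the inner pair cancel at its centre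
of mass and the quadrupole term is even. Comparing `T` with `0` then gives `T = O(w ^ 4)`, which is
`q₂ = O(u ^ 10)` and `q₃ = O(u ^ 12)`. -/

section StrictLocalMin

variable {α β γ : Type*} [TopologicalSpace α] [TopologicalSpace β] [Preorder γ]

/-- A strict local minimum: `f a < f x` for every `x ≠ a` close to `a`. -/
def IsStrictLocalMin (f : α → γ) (a : α) : Prop :=
  ∀ᶠ x in 𝓝[≠] a, f a < f x

theorem IsStrictLocalMin.isLocalMin {f : α → γ} {a : α} (h : IsStrictLocalMin f a) :
    IsLocalMin f a := by
  refine (eventually_nhdsWithin_iff.1 h).mono fun x hx => ?_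
  rcases eq_or_ne x a with rfl | hne
  · exact le_rfl
  · exact (hx hne).le

theorem IsStrictLocalMin.strictMono_comp {δ : Type*} [Preorder δ] {f : α → γ} {a : α} {g : γ → δ}
    (hg : StrictMono g) (h : IsStrictLocalMin f a) : IsStrictLocalMin (g ∘ f) a :=
  h.mono fun _ hx => hg hx

theorem IsStrictLocalMin.of_comp_le {f : α → γ} {g : β → γ} {φ : α → β} {a : α}
    (hg : IsStrictLocalMin g (φ a)) (hφ : ContinuousAt φ a) (ha : f a = g (φ a))
    (hle : ∀ᶠ x in 𝓝 a, g (φ x) ≤ f x)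
    (hfiber : ∀ᶠ x in 𝓝[≠] a, φ x = φ a → f a < f x) : IsStrictLocalMin f a := by
  have hpull := nhdsWithin_le_nhds (s := {a}ᶜ) (hφ.eventually (eventually_nhdsWithin_iff.1 hg))
  filter_upwards [hpull, nhdsWithin_le_nhds hle, hfiber] with x hgx hlex hfx
  by_cases hφx : φ x = φ a
  · exact hfx hφx
  · exact ha ▸ (hgx hφx).trans_le hlex

end StrictLocalMin

section MixedDifference

variable {E F G : Type*} [NormedAddCommGroup E] [NormedAddCommGroup F] [NormedAddCommGroup G]

/-- The mixed second differences of `f` with vertices in `U` are at most `C` times the product of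
the lengths of the two steps. -/
def MixedDifferenceBoundOn (C : ℝ) (f : E → F) (U : Set E) : Prop :=
  ∀ v h k, v ∈ U → v + h ∈ U → v + k ∈ U → v + k + h ∈ U →
    ‖f (v + k + h) - f (v + k) - (f (v + h) - f v)‖ ≤ C * ‖h‖ * ‖k‖

theorem exists_mixedDifferenceBoundOn [NormedSpace ℝ E] [NormedSpace ℝ F] {f : E → F}
    {x : E} (hf : ContDiffAt ℝ 2 f x) :
    ∃ C > 0, ∀ᶠ η in 𝓝[>] (0 : ℝ), MixedDifferenceBoundOn C f (Metric.closedBall x η) := by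
  obtain ⟨K, s, hs, hlip⟩ :=
    (hf.fderiv_right (m := 1) (by norm_num)).exists_lipschitzOnWith
  have hdiff : ∀ᶠ y in 𝓝 x, DifferentiableAt ℝ f y :=
    (hf.eventually (by simp)).mono fun y hy => hy.differentiableAt (by norm_num)
  refine ⟨K + 1, by positivity, ?_⟩
  filter_upwards [nhdsWithin_le_nhds (eventually_closedBall_subset (hdiff.and hs))]
    with η hball v h k hv hvh hvk hvkh
  have hconvex : Convex ℝ (Metric.closedBall x η ∩ (· + h) ⁻¹' Metric.closedBall x η) :=
    (convex_closedBall _ _).inter ((convex_closedBall _ _).translate_preimage_left h)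
  have hmean := hconvex.norm_image_sub_le_of_norm_hasFDerivWithin_le
    (f := fun y => f (y + h) - f y) (f' := fun y => fderiv ℝ f (y + h) - fderiv ℝ f y)
    (C := (K + 1) * ‖h‖) (x := v) (y := v + k)
    (fun y hy => (((hasFDerivAt_comp_add_right h).2 (hball hy.2).1.hasFDerivAt).sub
      (hball hy.1).1.hasFDerivAt).hasFDerivWithinAt)
    (fun y hy => ?_) ⟨hv, hvh⟩ ⟨hvk, hvkh⟩
  · simpa using hmean
  · have hle := hlip.norm_sub_le (hball hy.2).2 (hball hy.1).2
    rw [add_sub_cancel_left] at hle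
    exact hle.trans (by gcongr; linarith)

theorem MixedDifferenceBoundOn.norm_add_sub_two_smul_midpoint_le [NormedSpace ℝ E]
    [NormedSpace ℝ F] {C : ℝ} {f : E → F} {U : Set E} (hf : MixedDifferenceBoundOn C f U) {a b : E}
    (ha : a ∈ U) (hb : b ∈ U) (hab : midpoint ℝ a b ∈ U) :
    ‖f a + f b - (2 : ℝ) • f (midpoint ℝ a b)‖ ≤ C / 4 * ‖b - a‖ ^ 2 := by
  set h := (2⁻¹ : ℝ) • (b - a) with hh
  have hmid : a + h = midpoint ℝ a b := by rw [midpoint_eq_smul_add, invOf_eq_inv]; module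
  have hend : a + h + h = b := by module
  have hstep : ‖h‖ = 2⁻¹ * ‖b - a‖ := by rw [hh, norm_smul]; norm_num
  have hmixed := hf a h h ha (hmid ▸ hab) (hmid ▸ hab) (hend ▸ hb)
  rw [hend, hmid, hstep] at hmixed
  calc ‖f a + f b - (2 : ℝ) • f (midpoint ℝ a b)‖
      = ‖f b - f (midpoint ℝ a b) - (f (midpoint ℝ a b) - f a)‖ := by congr 1; module
    _ ≤ C * (2⁻¹ * ‖b - a‖) * (2⁻¹ * ‖b - a‖) := hmixed
    _ = C / 4 * ‖b - a‖ ^ 2 := by ring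

theorem MixedDifferenceBoundOn.comp_prodMk {C η : ℝ} {f : E × F → G} {x w : E} {y : F}
    (hf : MixedDifferenceBoundOn C f (Metric.closedBall (x, y) η)) (hw : dist w x ≤ η) :
    MixedDifferenceBoundOn C (fun z => f (w, z)) (Metric.closedBall y η) := by
  have hmem {z : F} (hz : z ∈ Metric.closedBall y η) : (w, z) ∈ Metric.closedBall (x, y) η := by
    rw [← closedBall_prod_same]
    exact ⟨hw, hz⟩
  intro v h k hv hvh hvk hvkh
  simpa using hf (w, v) (0, h) (0, k) (hmem hv) (by simpa using hmem hvh)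
    (by simpa using hmem hvk) (by simpa using hmem hvkh)

end MixedDifference

section NormalForm

/-- The rescaled energy near the limiting configuration: a quadratic well at
`(X, Y, T) = (1, 1, 0)` whose `Y`-direction is weak of order `w`, perturbed by `w ^ 2 * Ψ`.
The coordinates are `z = (X, Y, T)` and `Ψ` is a function of `(w, X, Y, T)`. -/
def normalForm (σ : ℝ) (Ψ : ℝ × ℝ × ℝ × ℝ → ℝ) (w : ℝ) (z : ℝ × ℝ × ℝ) : ℝ :=
  ((z.1 - 1) ^ 2 + z.2.2 ^ 2) / 2 + σ * w * (z.2.1 - 1) ^ 2 / 2 + w ^ 2 * Ψ (w, z)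

theorem mul_sq_norm_le_anisotropic {s : ℝ} (hs : 0 ≤ s) (hs1 : s ≤ 1) (d : ℝ × ℝ × ℝ) :
    s * ‖d‖ ^ 2 ≤ d.1 ^ 2 + d.2.2 ^ 2 + s * d.2.1 ^ 2 := by
  obtain ⟨x, y, t⟩ := d
  have hx : s * x ^ 2 ≤ x ^ 2 := mul_le_of_le_one_left (sq_nonneg x) hs1
  have ht : s * t ^ 2 ≤ t ^ 2 := mul_le_of_le_one_left (sq_nonneg t) hs1
  have hy : 0 ≤ s * y ^ 2 := by positivity
  simp only [Prod.norm_def, Real.norm_eq_abs]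
  rcases max_choice |x| (max |y| |t|) with h | h
  · rw [h, sq_abs]
    nlinarith [sq_nonneg t]
  · rcases max_choice |y| |t| with h' | h' <;> rw [h, h', sq_abs] <;>
      nlinarith [sq_nonneg t, sq_nonneg x]

variable {σ w η M C C' : ℝ} {Ψ : ℝ × ℝ × ℝ × ℝ → ℝ} {z : ℝ × ℝ × ℝ}

theorem sq_norm_sub_le_of_normalForm_le (hσ : 0 < σ) (hw : 0 < w) (hσw : σ * w ≤ 1)
    (hz : |Ψ (w, z)| ≤ M) (hbase : |Ψ (w, 1, 1, 0)| ≤ M)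
    (hle : normalForm σ Ψ w z ≤ normalForm σ Ψ w (1, 1, 0)) :
    ‖z - (1, 1, 0)‖ ^ 2 ≤ 4 * M / σ * w := by
  have hdiff : Ψ (w, 1, 1, 0) - Ψ (w, z) ≤ 2 * M := by
    linarith [(abs_le.1 hz).1, (abs_le.1 hbase).2]
  have hanis := mul_sq_norm_le_anisotropic (by positivity) hσw (z - (1, 1, 0))
  simp only [normalForm, sub_self, Prod.fst_sub, Prod.snd_sub, sub_zero] at hle hanis
  have hquad : σ * w * ‖z - (1, 1, 0)‖ ^ 2 ≤ σ * w * (4 * M / σ * w) := by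
    have hcancel : σ * w * (4 * M / σ * w) = 2 * w ^ 2 * (2 * M) := by field_simp; ring
    nlinarith [mul_le_mul_of_nonneg_left hdiff (sq_nonneg w)]
  exact le_of_mul_le_mul_left hquad (by positivity)

/-- Comparing `T` with `0`: the even part of `Ψ` costs `O(T ^ 2)` by its second difference and the
odd part is `O(w ^ 2 * T)`. -/
theorem abs_snd_snd_le_of_normalForm_le {X Y T : ℝ} (hC : C * w ^ 2 ≤ 1 / 2)
    (hC' : 0 ≤ C')
    (hsecond : |Ψ (w, X, Y, T) + Ψ (w, X, Y, -T) - 2 * Ψ (w, X, Y, 0)| ≤ C * T ^ 2)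
    (hodd : |Ψ (w, X, Y, -T) - Ψ (w, X, Y, T)| ≤ C' * (w ^ 2 * |T|))
    (hle : normalForm σ Ψ w (X, Y, T) ≤ normalForm σ Ψ w (X, Y, 0)) :
    |T| ≤ 2 * C' * w ^ 4 := by
  have hgain : T ^ 2 / 2 ≤ w ^ 2 * (Ψ (w, X, Y, 0) - Ψ (w, X, Y, T)) := by
    simp only [normalForm] at hle
    linarith
  have hloss : Ψ (w, X, Y, 0) - Ψ (w, X, Y, T) ≤ (C * T ^ 2 + C' * (w ^ 2 * |T|)) / 2 := by
    linarith [(abs_le.1 hsecond).1, (abs_le.1 hodd).2]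
  have hself : |T| * |T| ≤ |T| * (2 * C' * w ^ 4) := by
    have habs : |T| * |T| = T ^ 2 := by rw [← sq, sq_abs]
    nlinarith [mul_le_mul_of_nonneg_left hloss (sq_nonneg w),
      mul_le_mul_of_nonneg_right hC (sq_nonneg T)]
  rcases (abs_nonneg T).eq_or_lt with hzero | hpos
  · rw [← hzero]
    positivity
  · exact le_of_mul_le_mul_left hself hpos

theorem two_mul_normalForm_midpoint_lt {U : Set (ℝ × ℝ × ℝ)} (hw : 0 < w) (hσw : σ * w ≤ 1)
    (hC : C * w < σ) (hC0 : 0 ≤ C)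
    (hΨ : MixedDifferenceBoundOn C (fun z => Ψ (w, z)) U) {a b : ℝ × ℝ × ℝ}
    (ha : a ∈ U) (hb : b ∈ U) (hab : midpoint ℝ a b ∈ U) (hne : a ≠ b) :
    2 * normalForm σ Ψ w (midpoint ℝ a b) < normalForm σ Ψ w a + normalForm σ Ψ w b := by
  have hσ0 : 0 < σ := (by positivity : 0 ≤ C * w).trans_lt hC
  have hpert := (abs_le.1 (hΨ.norm_add_sub_two_smul_midpoint_le ha hb hab)).1
  have hanis := mul_sq_norm_le_anisotropic (by positivity) hσw (b - a)
  have hgain : w ^ 2 * C * ‖b - a‖ ^ 2 < σ * w * ‖b - a‖ ^ 2 := by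
    have hpos : 0 < ‖b - a‖ ^ 2 := by
      have := norm_pos_iff.2 (sub_ne_zero.2 hne.symm)
      positivity
    have : w ^ 2 * C < σ * w := by nlinarith
    gcongr
  have hmid : midpoint ℝ a b = ((a.1 + b.1) / 2, (a.2.1 + b.2.1) / 2, (a.2.2 + b.2.2) / 2) := by
    simp [midpoint_eq_smul_add, Prod.ext_iff, div_eq_inv_mul, mul_add]
  simp only [normalForm, hmid, smul_eq_mul, Prod.fst_sub, Prod.snd_sub] at hpert hanis ⊢
  nlinarith [mul_le_mul_of_nonneg_left hpert (sq_nonneg w)]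

theorem isStrictLocalMin_normalForm_of_isMinOn {U : Set (ℝ × ℝ × ℝ)} (hw : 0 < w)
    (hσw : σ * w ≤ 1) (hC : C * w < σ) (hC0 : 0 ≤ C)
    (hΨ : MixedDifferenceBoundOn C (fun z => Ψ (w, z)) U) (hU : Convex ℝ U)
    (hmin : IsMinOn (normalForm σ Ψ w) U z) (hz : U ∈ 𝓝 z) :
    IsStrictLocalMin (normalForm σ Ψ w) z := by
  have hzU := mem_of_mem_nhds hz
  filter_upwards [nhdsWithin_le_nhds hz, self_mem_nhdsWithin] with x hx hne
  have hmid : midpoint ℝ z x ∈ U := hU.midpoint_mem hzU hx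
  have hconv := two_mul_normalForm_midpoint_lt hw hσw hC hC0 hΨ hzU hx hmid (Ne.symm hne)
  linarith [isMinOn_iff.1 hmin _ hmid]

theorem exists_isMinOn_normalForm (hη : 0 < η) (hw : |w| ≤ η)
    (hcont : ContinuousOn Ψ (Metric.closedBall (0, 1, 1, 0) η)) :
    ∃ z ∈ Metric.closedBall ((1 : ℝ), (1 : ℝ), (0 : ℝ)) η,
      IsMinOn (normalForm σ Ψ w) (Metric.closedBall (1, 1, 0) η) z := by
  refine (isCompact_closedBall _ _).exists_isMinOn ⟨_, Metric.mem_closedBall_self hη.le⟩ ?_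
  have hslice : ContinuousOn (fun z : ℝ × ℝ × ℝ => Ψ (w, z)) (Metric.closedBall (1, 1, 0) η) :=
    hcont.comp (by fun_prop) fun z hz => by
      rw [← closedBall_prod_same]
      exact ⟨by simpa using hw, hz⟩
  exact ContinuousOn.add (by fun_prop) (continuousOn_const.mul hslice)

theorem exists_isStrictLocalMin_normalForm_of_bounds (hσ : 0 < σ) (hη : 0 < η) (hC0 : 0 ≤ C)
    (hC0' : 0 ≤ C') (hmixed : MixedDifferenceBoundOn C Ψ (Metric.closedBall (0, 1, 1, 0) η))
    (hΨ : ∀ v ∈ Metric.closedBall ((0 : ℝ), (1 : ℝ), (1 : ℝ), (0 : ℝ)) η,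
      ContinuousAt Ψ v ∧ |Ψ v| ≤ M ∧
        |Ψ (v.1, v.2.1, v.2.2.1, -v.2.2.2) - Ψ v| ≤ C' * (v.1 ^ 2 * |v.2.2.2|))
    (hw : 0 < w) (hwη : w ≤ η) (hσw : σ * w ≤ 1) (hCσ : C * w < σ) (hCw : C * w ^ 2 ≤ 1 / 2)
    (hMw : 4 * M / σ * w < η ^ 2) :
    ∃ z : ℝ × ℝ × ℝ, ‖z - (1, 1, 0)‖ ^ 2 ≤ 4 * M / σ * w ∧ |z.2.2| ≤ 2 * C' * w ^ 4 ∧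
      IsStrictLocalMin (normalForm σ Ψ w) z := by
  have hwη' : |w| ≤ η := by rwa [abs_of_pos hw]
  have hmem {z : ℝ × ℝ × ℝ} (hz : z ∈ Metric.closedBall (1, 1, 0) η) :
      (w, z) ∈ Metric.closedBall ((0 : ℝ), (1 : ℝ), (1 : ℝ), (0 : ℝ)) η := by
    rw [← closedBall_prod_same]
    exact ⟨by simpa using hwη', hz⟩
  obtain ⟨⟨X, Y, T⟩, hz, hmin⟩ := exists_isMinOn_normalForm (σ := σ) hη hwη'
    fun v hv => (hΨ v hv).1.continuousWithinAt
  have hbase := Metric.mem_closedBall_self (x := ((1 : ℝ), (1 : ℝ), (0 : ℝ))) hη.le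
  have hclose := sq_norm_sub_le_of_normalForm_le hσ hw hσw (hΨ _ (hmem hz)).2.1
    (hΨ _ (hmem hbase)).2.1 (isMinOn_iff.1 hmin _ hbase)
  have hslice := hmixed.comp_prodMk (w := w) (by simpa using hwη')
  refine ⟨(X, Y, T), hclose, ?_, ?_⟩
  · have hT {t : ℝ} (ht : |t| ≤ |T|) : (X, Y, t) ∈ Metric.closedBall (1, 1, (0 : ℝ)) η := by
      simp only [Metric.mem_closedBall, Prod.dist_eq, Real.dist_eq, sub_zero, max_le_iff] at hz ⊢
      exact ⟨hz.1, hz.2.1, ht.trans hz.2.2⟩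
    have hmid : midpoint ℝ (X, Y, T) (X, Y, -T) = (X, Y, 0) := by
      simp [midpoint_eq_smul_add, ← two_mul]
    have hsecond := hslice.norm_add_sub_two_smul_midpoint_le hz (hT (abs_neg T).le)
      (hmid ▸ hT (by simp))
    have hstep : ‖((X, Y, -T) : ℝ × ℝ × ℝ) - (X, Y, T)‖ = 2 * |T| := by
      simp [Prod.norm_def, ← two_mul, ← neg_add']
    rw [hmid, hstep, mul_pow, sq_abs, Real.norm_eq_abs, smul_eq_mul] at hsecond
    exact abs_snd_snd_le_of_normalForm_le hCw hC0' (hsecond.trans_eq (by ring))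
      (hΨ _ (hmem hz)).2.2 (isMinOn_iff.1 hmin _ (hT (by simp)))
  · refine isStrictLocalMin_normalForm_of_isMinOn hw hσw hCσ hC0 hslice (convex_closedBall _ _)
      hmin (mem_of_superset (Metric.isOpen_ball.mem_nhds ?_) Metric.ball_subset_closedBall)
    exact mem_ball_iff_norm.2 (lt_of_pow_lt_pow_left₀ 2 hη.le (hclose.trans_lt hMw))

theorem tendsto_of_sq_norm_sub_le_mul {E : Type*} [NormedAddCommGroup E] {z : ℝ → E} {a : E}
    {c : ℝ} (h : ∀ᶠ w in 𝓝[>] (0 : ℝ), ‖z w - a‖ ^ 2 ≤ c * w) :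
    Tendsto z (𝓝[>] 0) (𝓝 a) := by
  have hlin : Tendsto (fun w => c * w) (𝓝[>] 0) (𝓝 0) :=
    tendsto_nhdsWithin_of_tendsto_nhds (by simpa using (continuous_const_mul c).tendsto 0)
  have hsq := (squeeze_zero' (.of_forall fun w => by positivity) h hlin).sqrt
  simpa [tendsto_iff_norm_sub_tendsto_zero] using hsq

theorem exists_isStrictLocalMin_normalForm (hσ : 0 < σ) (hΨ : ContDiffAt ℝ 2 Ψ (0, 1, 1, 0))
    (hodd : (fun v => Ψ (v.1, v.2.1, v.2.2.1, -v.2.2.2) - Ψ v) =O[𝓝 (0, 1, 1, 0)]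
      fun v => v.1 ^ 2 * v.2.2.2) :
    ∃ z : ℝ → ℝ × ℝ × ℝ, Tendsto z (𝓝[>] 0) (𝓝 (1, 1, 0)) ∧
      (fun w => (z w).2.2) =O[𝓝[>] 0] (fun w => w ^ 4) ∧
      ∀ᶠ w in 𝓝[>] 0, IsStrictLocalMin (normalForm σ Ψ w) (z w) := by
  obtain ⟨C, hC, hmixed⟩ := exists_mixedDifferenceBoundOn hΨ
  obtain ⟨C', hC', hodd⟩ := hodd.exists_pos
  have hcont : ∀ᶠ v in 𝓝 (0, 1, 1, 0), ContinuousAt Ψ v :=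
    (hΨ.eventually (by simp)).mono fun v hv => hv.continuousAt
  have hbound : ∀ᶠ v in 𝓝 (0, 1, 1, 0), |Ψ v| ≤ |Ψ (0, 1, 1, 0)| + 1 :=
    (hΨ.continuousAt.abs.eventually_lt_const (lt_add_one _)).mono fun _ hv => hv.le
  obtain ⟨η, ⟨hmixed, hball⟩, hη⟩ := ((hmixed.and (nhdsWithin_le_nhds
    (eventually_closedBall_subset (hcont.and (hbound.and hodd.bound))))).and
      self_mem_nhdsWithin).exists
  set M := |Ψ (0, 1, 1, 0)| + 1
  have hsmall (a : ℝ) {b : ℝ} (hb : 0 < b) : ∀ᶠ w in 𝓝[>] (0 : ℝ), a * w < b :=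
    nhdsWithin_le_nhds <|
      (by fun_prop : ContinuousAt (fun w : ℝ => a * w) 0).eventually_lt_const (by simpa using hb)
  have hexists : ∀ᶠ w in 𝓝[>] (0 : ℝ), ∃ z : ℝ × ℝ × ℝ,
      ‖z - (1, 1, 0)‖ ^ 2 ≤ 4 * M / σ * w ∧ |z.2.2| ≤ 2 * C' * w ^ 4 ∧
        IsStrictLocalMin (normalForm σ Ψ w) z := by
    filter_upwards [self_mem_nhdsWithin, hsmall 1 hη, hsmall 1 one_pos, hsmall σ one_pos,
      hsmall C hσ, hsmall C one_half_pos, hsmall (4 * M / σ) (pow_pos hη 2)]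
      with w hw hwη hw1 hσw hCσ hCw hMw
    have hwpos : 0 < w := hw
    refine exists_isStrictLocalMin_normalForm_of_bounds hσ hη hC.le hC'.le hmixed
      (fun v hv => ⟨(hball hv).1, (hball hv).2.1, ?_⟩) hw (by linarith) hσw.le hCσ
      (by nlinarith) hMw
    simpa [abs_mul] using (hball hv).2.2
  obtain ⟨z, hz⟩ := hexists.choice
  refine ⟨z, ?_, ?_, hz.mono fun w hw => hw.2.2⟩
  · exact tendsto_of_sq_norm_sub_le_mul (hz.mono fun w hw => hw.1)
  · exact IsBigO.of_bound (2 * C') (hz.mono fun w hw => hw.2.1.trans_eq (by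
      rw [Real.norm_eq_abs, abs_of_nonneg (by positivity)]))

/-- Only `Θ` has an odd part, and that part vanishes at `w = 0`. -/
theorem isBigO_odd_part_of_even {E Θ : ℝ × ℝ × ℝ × ℝ → ℝ} (hΘ : ContDiffAt ℝ 2 Θ (0, 1, 1, 0))
    (hE : ∀ w X Y T, E (w, X, Y, -T) = E (w, X, Y, T))
    (hΘ0 : ∀ X Y T, Θ (0, X, Y, -T) = Θ (0, X, Y, T)) :
    (fun v : ℝ × ℝ × ℝ × ℝ => (E (v.1, v.2.1, v.2.2.1, -v.2.2.2) +
        v.1 * Θ (v.1, v.2.1, v.2.2.1, -v.2.2.2)) - (E v + v.1 * Θ v))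
      =O[𝓝 (0, 1, 1, 0)] fun v => v.1 ^ 2 * v.2.2.2 := by
  obtain ⟨C, -, hmixed⟩ := exists_mixedDifferenceBoundOn hΘ
  obtain ⟨η, hmixed, hη⟩ := (hmixed.and self_mem_nhdsWithin).exists
  refine IsBigO.of_bound (2 * C) ?_
  filter_upwards [Metric.closedBall_mem_nhds _ hη] with ⟨w, X, Y, T⟩ hv
  simp only [Metric.mem_closedBall, Prod.dist_eq, Real.dist_eq, sub_zero, max_le_iff] at hv
  obtain ⟨hw, hX, hY, hT⟩ := hv
  have hmem {w' T' : ℝ} (hw' : |w'| ≤ η) (hT' : |T'| ≤ η) :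
      (w', X, Y, T') ∈ Metric.closedBall ((0 : ℝ), (1 : ℝ), (1 : ℝ), (0 : ℝ)) η := by
    simp only [Metric.mem_closedBall, Prod.dist_eq, Real.dist_eq, sub_zero, max_le_iff]
    exact ⟨hw', hX, hY, hT'⟩
  have h0 : |(0 : ℝ)| ≤ η := by simpa using hη.le
  have hnT : |-T| ≤ η := by rwa [abs_neg]
  have hbound := hmixed (0, X, Y, T) (w, 0, 0, 0) (0, 0, 0, -T - T) (hmem h0 hT)
    (by simpa using hmem hw hT) (by simpa using hmem h0 hnT) (by simpa using hmem hw hnT)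
  have hstep_w : ‖((w, 0, 0, 0) : ℝ × ℝ × ℝ × ℝ)‖ = |w| := by simp [Prod.norm_def]
  have hstep_T : ‖((0, 0, 0, -T - T) : ℝ × ℝ × ℝ × ℝ)‖ = 2 * |T| := by
    simp [Prod.norm_def, ← two_mul, ← neg_add']
  simp only [Prod.mk_add_mk, add_zero, zero_add, add_sub_cancel, hΘ0, sub_sub_sub_cancel_right,
    hstep_w, hstep_T, Real.norm_eq_abs] at hbound
  simp only [hE, Real.norm_eq_abs]
  rw [add_sub_add_left_eq_sub, ← mul_sub, abs_mul, abs_mul, abs_pow]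
  calc |w| * |Θ (w, X, Y, -T) - Θ (w, X, Y, T)| ≤ |w| * (C * |w| * (2 * |T|)) := by gcongr
    _ = 2 * C * (|w| ^ 2 * |T|) := by ring

end NormalForm

section KineticPerturbation

/-- The larger eigenvalue of `e eᵀ + b f fᵀ` for unit vectors `e`, `f` of the plane with inner
product `τ`; the smaller one is `1 + b - topEigenvalue b τ`. -/
def topEigenvalue (b τ : ℝ) : ℝ :=
  (1 + b + √((1 - b) ^ 2 + 4 * b * τ ^ 2)) / 2

/-- The ratio `‖x‖ / ‖y‖` of the inner to the outer separation, in the coordinates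
`v = (w, X, Y, T)`. -/
def sepRatio (v : ℝ × ℝ × ℝ × ℝ) : ℝ :=
  v.1 * v.2.2.1 / v.2.1

/-- The cosine of the angle between the inner and the outer separation vectors, in the coordinates
`v = (w, X, Y, T)`. -/
def cosAngle (v : ℝ × ℝ × ℝ × ℝ) : ℝ :=
  v.2.2.2 / √(v.2.1 ^ 2 + v.2.2.2 ^ 2)

/-- The part of order `w ^ 2` of the rescaled kinetic energy, in the coordinates
`v = (w, X, Y, T)`. -/
def kineticPerturbation (χ σ : ℝ) (v : ℝ × ℝ × ℝ × ℝ) : ℝ :=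
  let P := topEigenvalue (χ * sepRatio v ^ 2) (cosAngle v)
  χ * (v.2.2.1 / v.2.1) ^ 2 / (2 * (P - χ * sepRatio v ^ 2)) *
    (v.2.2.2 ^ 2 - σ * v.1 * v.2.2.1 ^ 2 * cosAngle v ^ 2 / P)

variable {b χ τ X T : ℝ}

theorem topEigenvalue_sub_one_mul_sub (hb : 0 ≤ b) (τ : ℝ) :
    (topEigenvalue b τ - 1) * (topEigenvalue b τ - b) = b * τ ^ 2 := by
  have hsq : √((1 - b) ^ 2 + 4 * b * τ ^ 2) ^ 2 = (1 - b) ^ 2 + 4 * b * τ ^ 2 :=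
    Real.sq_sqrt (by positivity)
  unfold topEigenvalue
  linear_combination hsq / 4

theorem one_le_topEigenvalue (hb : 0 ≤ b) (τ : ℝ) : 1 ≤ topEigenvalue b τ := by
  have : 1 - b ≤ √((1 - b) ^ 2 + 4 * b * τ ^ 2) :=
    Real.le_sqrt_of_sq_le (le_add_of_nonneg_right (by positivity))
  unfold topEigenvalue
  linarith

theorem sq_cosAngle_mul (w Y : ℝ) (hX : X ≠ 0) :
    cosAngle (w, X, Y, T) ^ 2 * (X ^ 2 + T ^ 2) = T ^ 2 := by
  have hpos : 0 < X ^ 2 + T ^ 2 := by positivity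
  rw [cosAngle, div_pow, Real.sq_sqrt hpos.le, div_mul_cancel₀ _ hpos.ne']

theorem sq_cosAngle_lt_one (w Y T : ℝ) (hX : X ≠ 0) : cosAngle (w, X, Y, T) ^ 2 < 1 := by
  have hX2 : 0 < X ^ 2 := by positivity
  nlinarith [sq_cosAngle_mul (T := T) w Y hX, sq_nonneg (cosAngle (w, X, Y, T)), sq_nonneg T]

theorem cosAngle_neg (w X Y T : ℝ) : cosAngle (w, X, Y, -T) = -cosAngle (w, X, Y, T) := by
  simp only [cosAngle, neg_sq, neg_div]

/-- Here `(X ^ 2 + T ^ 2) * P` and `Y ^ 2 / P` are the contributions of the two angular momenta,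
and `P - 1 = b * τ ^ 2 / (P - b)` is of second order in `w`. -/
theorem kinetic_eq_add_kineticPerturbation (σ w Y T : ℝ) (hχ : 0 ≤ χ) (hX : X ≠ 0)
    (hb : χ * sepRatio (w, X, Y, T) ^ 2 < 1) :
    (X ^ 2 + T ^ 2) * topEigenvalue (χ * sepRatio (w, X, Y, T) ^ 2) (cosAngle (w, X, Y, T)) / 2 +
        σ * w * Y ^ 2 /
          (2 * topEigenvalue (χ * sepRatio (w, X, Y, T) ^ 2) (cosAngle (w, X, Y, T))) =
      (X ^ 2 + T ^ 2) / 2 + σ * w * Y ^ 2 / 2 +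
        w ^ 2 * kineticPerturbation χ σ (w, X, Y, T) := by
  have hb0 : 0 ≤ χ * sepRatio (w, X, Y, T) ^ 2 := by positivity
  have hP1 := one_le_topEigenvalue hb0 (cosAngle (w, X, Y, T))
  have hchar := topEigenvalue_sub_one_mul_sub hb0 (cosAngle (w, X, Y, T))
  have hcos := sq_cosAngle_mul (T := T) w Y hX
  have hbdef : χ * sepRatio (w, X, Y, T) ^ 2 = w ^ 2 * (χ * (Y / X) ^ 2) := by
    simp only [sepRatio]
    ring
  simp only [kineticPerturbation]
  set b := χ * sepRatio (w, X, Y, T) ^ 2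
  set τ := cosAngle (w, X, Y, T)
  set P := topEigenvalue b τ
  have : 0 < P := by linarith
  have hPb : 0 < P - b := by linarith
  have hexcess : P - 1 = b * τ ^ 2 / (P - b) := by rw [eq_div_iff hPb.ne', hchar]
  calc (X ^ 2 + T ^ 2) * P / 2 + σ * w * Y ^ 2 / (2 * P)
      = (X ^ 2 + T ^ 2) / 2 + σ * w * Y ^ 2 / 2 +
          (P - 1) * ((X ^ 2 + T ^ 2) / 2 - σ * w * Y ^ 2 / (2 * P)) := by field_simp; ring
    _ = (X ^ 2 + T ^ 2) / 2 + σ * w * Y ^ 2 / 2 +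
          b / (2 * (P - b)) * (τ ^ 2 * (X ^ 2 + T ^ 2) - σ * w * Y ^ 2 * τ ^ 2 / P) := by
        rw [hexcess]; field_simp
    _ = (X ^ 2 + T ^ 2) / 2 + σ * w * Y ^ 2 / 2 + w ^ 2 * (χ * (Y / X) ^ 2 / (2 * (P - b)) *
          (T ^ 2 - σ * w * Y ^ 2 * τ ^ 2 / P)) := by
        rw [hcos]
        nth_rw 1 [hbdef]
        ring

theorem kineticPerturbation_neg (χ σ w X Y T : ℝ) :
    kineticPerturbation χ σ (w, X, Y, -T) = kineticPerturbation χ σ (w, X, Y, T) := by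
  simp only [kineticPerturbation, topEigenvalue, cosAngle_neg, sepRatio, neg_sq]

theorem contDiffAt_sepRatio : ContDiffAt ℝ 2 sepRatio (0, 1, 1, 0) := by
  unfold sepRatio
  fun_prop (disch := norm_num)

theorem contDiffAt_cosAngle : ContDiffAt ℝ 2 cosAngle (0, 1, 1, 0) := by
  unfold cosAngle
  fun_prop (disch := norm_num)

theorem contDiffAt_kineticPerturbation (χ σ : ℝ) :
    ContDiffAt ℝ 2 (kineticPerturbation χ σ) (0, 1, 1, 0) := by
  have := contDiffAt_sepRatio
  have := contDiffAt_cosAngle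
  unfold kineticPerturbation topEigenvalue
  fun_prop (disch := norm_num [sepRatio, cosAngle])

end KineticPerturbation

section PotentialPerturbation

/-- The second-order Taylor remainder of `1 / √(1 + ξ)`, divided by `ξ ^ 2`. -/
def invSqrtRemainder (ξ : ℝ) : ℝ :=
  (√(1 + ξ) + 2) / (2 * √(1 + ξ) * (√(1 + ξ) + 1) ^ 2)

/-- The part of `-1 / ‖e + x f‖` of order at least two in `x`, divided by `x ^ 2`, for unit vectors
`e`, `f` with inner product `τ`. -/
def multipoleRemainder (x τ : ℝ) : ℝ :=
  1 / 2 - (x + 2 * τ) ^ 2 * invSqrtRemainder (x ^ 2 + 2 * x * τ)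

/-- The sum of the multipole remainders of the two bodies of the inner pair. -/
def pairRemainder (m₂ m₃ z τ : ℝ) : ℝ :=
  m₃ * (m₂ / (m₂ + m₃)) ^ 2 * multipoleRemainder (m₂ / (m₂ + m₃) * z) τ +
    m₂ * (m₃ / (m₂ + m₃)) ^ 2 * multipoleRemainder (-(m₃ / (m₂ + m₃) * z)) τ

/-- The part of order `w ^ 3` of the rescaled Newtonian potential, in the coordinates
`v = (w, X, Y, T)`. -/
def potentialPerturbation (m₁ m₂ m₃ : ℝ) (v : ℝ × ℝ × ℝ × ℝ) : ℝ :=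
  m₁ / (m₂ * m₃) * (v.2.2.1 ^ 3 / v.2.1 ^ 2) * pairRemainder m₂ m₃ (sepRatio v) (cosAngle v)

theorem inv_sqrt_one_add {ξ : ℝ} (hξ : 0 < 1 + ξ) :
    1 / √(1 + ξ) = 1 - ξ / 2 + ξ ^ 2 * invSqrtRemainder ξ := by
  have hs : 0 < √(1 + ξ) := Real.sqrt_pos.2 hξ
  have hξs : ξ = √(1 + ξ) ^ 2 - 1 := by rw [Real.sq_sqrt hξ.le]; ring
  unfold invSqrtRemainder
  set s := √(1 + ξ)
  rw [hξs]
  field_simp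
  ring

theorem inv_sqrt_multipole (x : ℝ) {τ : ℝ} (hτ : τ ^ 2 < 1) :
    1 / √(1 + 2 * x * τ + x ^ 2) = 1 - x * τ - x ^ 2 * multipoleRemainder x τ := by
  have hpos : 0 < 1 + (x ^ 2 + 2 * x * τ) := by nlinarith [sq_nonneg (x + τ)]
  rw [show 1 + 2 * x * τ + x ^ 2 = 1 + (x ^ 2 + 2 * x * τ) by ring, inv_sqrt_one_add hpos]
  unfold multipoleRemainder
  ring

theorem inv_sqrt_multipole_scaled (r a : ℝ) {ρ τ : ℝ} (hρ : 0 < ρ) (hτ : τ ^ 2 < 1) :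
    1 / √(a ^ 2 * r ^ 2 + ρ ^ 2 + 2 * a * (r * ρ * τ)) =
      (1 - a * (r / ρ) * τ - (a * (r / ρ)) ^ 2 * multipoleRemainder (a * (r / ρ)) τ) / ρ := by
  have hscale : a ^ 2 * r ^ 2 + ρ ^ 2 + 2 * a * (r * ρ * τ) =
      ρ ^ 2 * (1 + 2 * (a * (r / ρ)) * τ + (a * (r / ρ)) ^ 2) := by field_simp; ring
  rw [hscale, Real.sqrt_mul (sq_nonneg ρ), Real.sqrt_sq hρ.le, mul_comm ρ, ← div_div,
    inv_sqrt_multipole _ hτ]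

/-- The dipole terms cancel because the pair `m₂`, `m₃` is balanced about its centre of mass. -/
theorem Vnewt_eq_multipole {m₂ m₃ r ρ τ : ℝ} (m₁ : ℝ) (hm : m₂ + m₃ ≠ 0) (hr : 0 < r)
    (hρ : 0 < ρ) (hτ : τ ^ 2 < 1) :
    Vnewt m₁ m₂ m₃ ![r ^ 2, ρ ^ 2, r * ρ * τ] =
      -(m₂ * m₃ / r) - m₁ * (m₂ + m₃) / ρ +
        m₁ * ((r / ρ) ^ 2 / ρ) * pairRemainder m₂ m₃ (r / ρ) τ := by
  have hpair₂ := inv_sqrt_multipole_scaled r (m₂ / (m₂ + m₃)) hρ hτ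
  have hpair₃ := inv_sqrt_multipole_scaled r (-(m₃ / (m₂ + m₃))) hρ hτ
  have hneg : (-(m₃ / (m₂ + m₃))) ^ 2 * r ^ 2 + ρ ^ 2 + 2 * -(m₃ / (m₂ + m₃)) * (r * ρ * τ) =
      (m₃ / (m₂ + m₃)) ^ 2 * r ^ 2 + ρ ^ 2 - 2 * (m₃ / (m₂ + m₃)) * (r * ρ * τ) := by ring
  rw [hneg, neg_mul] at hpair₃
  simp only [Vnewt, pairRemainder, Matrix.cons_val_zero, Matrix.cons_val_one, Matrix.cons_val]
  rw [Real.sqrt_sq hr.le, ← mul_one_div (m₃ * m₁), ← mul_one_div (m₁ * m₂), hpair₂, hpair₃]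
  field_simp
  ring

theorem multipoleRemainder_zero_neg (τ : ℝ) :
    multipoleRemainder 0 (-τ) = multipoleRemainder 0 τ := by
  simp [multipoleRemainder]

theorem potentialPerturbation_zero_neg (m₁ m₂ m₃ X Y T : ℝ) :
    potentialPerturbation m₁ m₂ m₃ (0, X, Y, -T) = potentialPerturbation m₁ m₂ m₃ (0, X, Y, T) := by
  simp only [potentialPerturbation, pairRemainder, cosAngle_neg, sepRatio, zero_mul, zero_div,
    mul_zero, neg_zero, multipoleRemainder_zero_neg]

theorem contDiffAt_invSqrtRemainder {ξ : ℝ} (hξ : 0 < 1 + ξ) :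
    ContDiffAt ℝ 2 invSqrtRemainder ξ := by
  have := Real.sqrt_pos.2 hξ
  unfold invSqrtRemainder
  fun_prop (disch := positivity)

theorem contDiffAt_potentialPerturbation (m₁ m₂ m₃ : ℝ) :
    ContDiffAt ℝ 2 (potentialPerturbation m₁ m₂ m₃) (0, 1, 1, 0) := by
  have hz := contDiffAt_sepRatio
  have hτ := contDiffAt_cosAngle
  have hk (a : ℝ) : ContDiffAt ℝ 2 (fun v => invSqrtRemainder
      ((a * sepRatio v) ^ 2 + 2 * (a * sepRatio v) * cosAngle v)) (0, 1, 1, 0) :=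
    ContDiffAt.comp _ (contDiffAt_invSqrtRemainder (by simp [sepRatio])) (by fun_prop)
  have hM (a : ℝ) : ContDiffAt ℝ 2 (fun v => multipoleRemainder (a * sepRatio v) (cosAngle v))
      (0, 1, 1, 0) := by
    have := hk a
    unfold multipoleRemainder
    fun_prop
  have := hM (m₂ / (m₂ + m₃))
  have hM₃ := hM (-(m₃ / (m₂ + m₃)))
  unfold potentialPerturbation pairRemainder
  simp only [neg_mul] at hM₃
  fun_prop (disch := norm_num)

end PotentialPerturbation

section EffectivePotential

/-- The `(1, 1)` entry of the Gram matrix `x xᵀ / ν₂ + y yᵀ / ν₁` of the configuration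
`x = (q₀, q₁)`, `y = (q₂, q₃)`. -/
def gram₁₁ (ν₁ ν₂ : ℝ) (q : Fin 4 → ℝ) : ℝ :=
  q 2 ^ 2 / ν₁ + q 0 ^ 2 / ν₂

/-- The `(2, 2)` entry of the Gram matrix `x xᵀ / ν₂ + y yᵀ / ν₁` of the configuration
`x = (q₀, q₁)`, `y = (q₂, q₃)`. -/
def gram₂₂ (ν₁ ν₂ : ℝ) (q : Fin 4 → ℝ) : ℝ :=
  q 3 ^ 2 / ν₁ + q 1 ^ 2 / ν₂

/-- The fully reduced Hamiltonian at zero momentum, as a function of the position. -/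
def effectivePotential (ν₁ ν₂ μ₁ μ₂ : ℝ) (V : (Fin 3 → ℝ) → ℝ) (q : Fin 4 → ℝ) : ℝ :=
  (μ₁ ^ 2 * gram₁₁ ν₁ ν₂ q + μ₂ ^ 2 * gram₂₂ ν₁ ν₂ q) / (2 * (q 0 * q 3 - q 1 * q 2) ^ 2) +
    V ![q 0 ^ 2 + q 1 ^ 2, q 2 ^ 2 + q 3 ^ 2, q 0 * q 2 + q 1 * q 3]

variable {ν₁ ν₂ μ₁ μ₂ : ℝ} {V : (Fin 3 → ℝ) → ℝ} {q p : Fin 4 → ℝ}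

theorem Hred_eq_gram (ν₁ ν₂ μ₁ μ₂ : ℝ) (V : (Fin 3 → ℝ) → ℝ) (q p : Fin 4 → ℝ) :
    let L₃ := q 0 * p 1 - q 1 * p 0 + q 2 * p 3 - q 3 * p 2
    let d := √((μ₁ - μ₂) ^ 2 - L₃ ^ 2)
    let s := √((μ₁ + μ₂) ^ 2 - L₃ ^ 2)
    Hred ν₁ ν₂ μ₁ μ₂ V (q, p) =
      (p 0 ^ 2 + p 1 ^ 2) / (2 * ν₁) + (p 2 ^ 2 + p 3 ^ 2) / (2 * ν₂) +
        ((d + s) ^ 2 * gram₁₁ ν₁ ν₂ q + (d - s) ^ 2 * gram₂₂ ν₁ ν₂ q) /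
          (8 * (q 0 * q 3 - q 1 * q 2) ^ 2) +
        V ![q 0 ^ 2 + q 1 ^ 2, q 2 ^ 2 + q 3 ^ 2, q 0 * q 2 + q 1 * q 3] := by
  simp only [Hred, fred, gram₁₁, gram₂₂]
  generalize q 0 * q 3 - q 1 * q 2 = D
  ring

theorem Hred_zero_momentum (hμ₂ : 0 ≤ μ₂) (hμ : μ₂ ≤ μ₁) (q : Fin 4 → ℝ) :
    Hred ν₁ ν₂ μ₁ μ₂ V (q, 0) = effectivePotential ν₁ ν₂ μ₁ μ₂ V q := by
  have hd : √((μ₁ - μ₂) ^ 2) = μ₁ - μ₂ := Real.sqrt_sq (by linarith)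
  have hs : √((μ₁ + μ₂) ^ 2) = μ₁ + μ₂ := Real.sqrt_sq (by linarith)
  simp only [Hred_eq_gram, effectivePotential, Pi.zero_apply, mul_zero, sub_zero, add_zero, ne_eq,
    OfNat.ofNat_ne_zero, not_false_eq_true, zero_pow, hd, hs]
  generalize q 0 * q 3 - q 1 * q 2 = D
  ring

/-- With `Δ = μ₁ - μ₂` and `Σ = μ₁ + μ₂`, the cross term is controlled by the arithmetic-geometric
inequality `2 (d Σ) (s Δ) ≤ (d Σ) ^ 2 + (s Δ) ^ 2`. -/
theorem centrifugal_ge_of_le {g₁ g₂ L : ℝ} (hμ₂ : 0 < μ₂) (hμ : μ₂ < μ₁) (hg₁ : 0 ≤ g₁)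
    (hg : μ₁ ^ 2 * g₁ ≤ μ₂ ^ 2 * g₂) (hL : L ^ 2 ≤ (μ₁ - μ₂) ^ 2) :
    4 * (μ₁ ^ 2 * g₁ + μ₂ ^ 2 * g₂) ≤
      (√((μ₁ - μ₂) ^ 2 - L ^ 2) + √((μ₁ + μ₂) ^ 2 - L ^ 2)) ^ 2 * g₁ +
        (√((μ₁ - μ₂) ^ 2 - L ^ 2) - √((μ₁ + μ₂) ^ 2 - L ^ 2)) ^ 2 * g₂ := by
  have hdiff_le : (μ₁ - μ₂) ^ 2 ≤ (μ₁ + μ₂) ^ 2 := by nlinarith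
  have hd := Real.sq_sqrt (sub_nonneg.2 hL)
  have hs := Real.sq_sqrt (sub_nonneg.2 (hL.trans hdiff_le))
  set d := √((μ₁ - μ₂) ^ 2 - L ^ 2)
  set s := √((μ₁ + μ₂) ^ 2 - L ^ 2)
  have hμsq : 0 < μ₁ ^ 2 - μ₂ ^ 2 := by nlinarith
  have hcross : d * s * (μ₁ ^ 2 - μ₂ ^ 2) ≤
      (μ₁ ^ 2 - μ₂ ^ 2) ^ 2 - L ^ 2 * (μ₁ ^ 2 + μ₂ ^ 2) := by
    have hamgm := two_mul_le_add_sq (d * (μ₁ + μ₂)) (s * (μ₁ - μ₂))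
    rw [mul_pow, mul_pow, hd, hs] at hamgm
    linarith
  have hle : g₁ ≤ g₂ := by
    have : μ₂ ^ 2 * g₁ ≤ μ₂ ^ 2 * g₂ := by nlinarith
    exact le_of_mul_le_mul_left this (by positivity)
  have hscaled : 0 ≤ (μ₁ ^ 2 - μ₂ ^ 2) *
      ((d + s) ^ 2 * g₁ + (d - s) ^ 2 * g₂ - 4 * (μ₁ ^ 2 * g₁ + μ₂ ^ 2 * g₂)) := by
    calc 0 ≤ 2 * (((μ₁ ^ 2 - μ₂ ^ 2) ^ 2 - L ^ 2 * (μ₁ ^ 2 + μ₂ ^ 2) -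
              d * s * (μ₁ ^ 2 - μ₂ ^ 2)) * (g₂ - g₁)) +
            4 * (L ^ 2 * (μ₂ ^ 2 * g₂ - μ₁ ^ 2 * g₁)) :=
          add_nonneg (mul_nonneg zero_le_two (mul_nonneg (sub_nonneg.2 hcross) (sub_nonneg.2 hle)))
            (mul_nonneg zero_le_four (mul_nonneg (sq_nonneg L) (sub_nonneg.2 hg)))
      _ = _ := by linear_combination (-(μ₁ ^ 2 - μ₂ ^ 2) * (g₁ + g₂)) * (hd + hs)
  linarith [nonneg_of_mul_nonneg_right hscaled hμsq]

theorem effectivePotential_add_kinetic_le_Hred (hν₁ : 0 < ν₁) (hν₂ : 0 < ν₂) (hμ₂ : 0 < μ₂)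
    (hμ : μ₂ < μ₁) (hq : μ₁ ^ 2 * gram₁₁ ν₁ ν₂ q ≤ μ₂ ^ 2 * gram₂₂ ν₁ ν₂ q)
    (hL : (q 0 * p 1 - q 1 * p 0 + q 2 * p 3 - q 3 * p 2) ^ 2 ≤ (μ₁ - μ₂) ^ 2) :
    (p 0 ^ 2 + p 1 ^ 2) / (2 * ν₁) + (p 2 ^ 2 + p 3 ^ 2) / (2 * ν₂) +
      effectivePotential ν₁ ν₂ μ₁ μ₂ V q ≤ Hred ν₁ ν₂ μ₁ μ₂ V (q, p) := by
  have hg₁ : 0 ≤ gram₁₁ ν₁ ν₂ q := by unfold gram₁₁; positivity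
  have hcentrifugal := centrifugal_ge_of_le hμ₂ hμ hg₁ hq hL
  have hscale : (μ₁ ^ 2 * gram₁₁ ν₁ ν₂ q + μ₂ ^ 2 * gram₂₂ ν₁ ν₂ q) /
      (2 * (q 0 * q 3 - q 1 * q 2) ^ 2) = 4 * (μ₁ ^ 2 * gram₁₁ ν₁ ν₂ q + μ₂ ^ 2 * gram₂₂ ν₁ ν₂ q) /
      (8 * (q 0 * q 3 - q 1 * q 2) ^ 2) := by
    generalize q 0 * q 3 - q 1 * q 2 = D
    ring
  rw [Hred_eq_gram, effectivePotential, hscale, ← add_assoc]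
  gcongr

theorem kinetic_pos (hν₁ : 0 < ν₁) (hν₂ : 0 < ν₂) (hp : p ≠ 0) :
    0 < (p 0 ^ 2 + p 1 ^ 2) / (2 * ν₁) + (p 2 ^ 2 + p 3 ^ 2) / (2 * ν₂) := by
  obtain ⟨i, hi⟩ := Function.ne_iff.1 hp
  fin_cases i <;> simp only [Pi.zero_apply, Fin.zero_eta, Fin.mk_one, Fin.reduceFinMk] at hi <;>
    positivity

theorem IsStrictLocalMin.Hred_of_effectivePotential (hν₁ : 0 < ν₁) (hν₂ : 0 < ν₂) (hμ₂ : 0 < μ₂)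
    (hμ : μ₂ < μ₁) (hq : μ₁ ^ 2 * gram₁₁ ν₁ ν₂ q < μ₂ ^ 2 * gram₂₂ ν₁ ν₂ q)
    (hmin : IsStrictLocalMin (effectivePotential ν₁ ν₂ μ₁ μ₂ V) q) :
    IsStrictLocalMin (Hred ν₁ ν₂ μ₁ μ₂ V) (q, 0) := by
  have hgram : ∀ᶠ z : (Fin 4 → ℝ) × (Fin 4 → ℝ) in 𝓝 (q, 0),
      μ₁ ^ 2 * gram₁₁ ν₁ ν₂ z.1 < μ₂ ^ 2 * gram₂₂ ν₁ ν₂ z.1 :=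
    ContinuousAt.eventually_lt (by unfold gram₁₁; fun_prop) (by unfold gram₂₂; fun_prop) hq
  have hL : ∀ᶠ z : (Fin 4 → ℝ) × (Fin 4 → ℝ) in 𝓝 (q, 0),
      (z.1 0 * z.2 1 - z.1 1 * z.2 0 + z.1 2 * z.2 3 - z.1 3 * z.2 2) ^ 2 < (μ₁ - μ₂) ^ 2 :=
    ContinuousAt.eventually_lt (by fun_prop) continuousAt_const
      (by simpa using sq_pos_of_pos (sub_pos.2 hμ))
  have hbound := (hgram.and hL).mono fun z hz =>
    effectivePotential_add_kinetic_le_Hred (V := V) hν₁ hν₂ hμ₂ hμ hz.1.le hz.2.le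
  refine hmin.of_comp_le (φ := Prod.fst) continuousAt_fst (Hred_zero_momentum hμ₂.le hμ.le q)
    (hbound.mono fun z hz => le_trans (le_add_of_nonneg_left (by positivity)) hz) ?_
  filter_upwards [nhdsWithin_le_nhds hbound, self_mem_nhdsWithin] with ⟨q', p⟩ hz hne hq'
  obtain rfl : q' = q := hq'
  have hp : p ≠ 0 := fun h => hne (by simp [h])
  rw [Hred_zero_momentum hμ₂.le hμ.le]
  exact (lt_add_of_pos_left _ (kinetic_pos hν₁ hν₂ hp)).trans_le hz

end EffectivePotential

section ComplexConfiguration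

open ComplexConjugate

/-- The inner separation vector `x = q₀ + i q₁`. -/
def innerVec (q : Fin 4 → ℝ) : ℂ :=
  ⟨q 0, q 1⟩

/-- The outer separation vector `y = q₂ + i q₃`. -/
def outerVec (q : Fin 4 → ℝ) : ℂ :=
  ⟨q 2, q 3⟩

/-- The rotation-invariant product `x̄ y`, whose real and imaginary parts are the inner product and
the oriented area of the two separation vectors. -/
def relProduct (q : Fin 4 → ℝ) : ℂ :=
  conj (innerVec q) * outerVec q

/-- The trace-free part `x ^ 2 / ν₂ + y ^ 2 / ν₁` of the Gram matrix, as a complex number. -/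
def gramTensor (ν₁ ν₂ : ℝ) (q : Fin 4 → ℝ) : ℂ :=
  innerVec q ^ 2 / ν₂ + outerVec q ^ 2 / ν₁

variable {ν₁ ν₂ : ℝ} {q q' : Fin 4 → ℝ}

theorem relProduct_re (q : Fin 4 → ℝ) : (relProduct q).re = q 0 * q 2 + q 1 * q 3 := by
  simp [relProduct, innerVec, outerVec]

theorem relProduct_im (q : Fin 4 → ℝ) : (relProduct q).im = q 0 * q 3 - q 1 * q 2 := by
  rw [relProduct, innerVec, outerVec, Complex.mul_im, Complex.conj_re, Complex.conj_im]
  ring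

theorem norm_relProduct (q : Fin 4 → ℝ) : ‖relProduct q‖ = ‖innerVec q‖ * ‖outerVec q‖ := by
  simp [relProduct]

theorem sq_norm_innerVec (q : Fin 4 → ℝ) : ‖innerVec q‖ ^ 2 = q 0 ^ 2 + q 1 ^ 2 := by
  rw [Complex.sq_norm, Complex.normSq_apply, innerVec]
  ring

theorem sq_norm_outerVec (q : Fin 4 → ℝ) : ‖outerVec q‖ ^ 2 = q 2 ^ 2 + q 3 ^ 2 := by
  rw [Complex.sq_norm, Complex.normSq_apply, outerVec]
  ring

theorem sq_re_add_sq_im_relProduct (q : Fin 4 → ℝ) :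
    (relProduct q).re ^ 2 + (relProduct q).im ^ 2 = ‖innerVec q‖ ^ 2 * ‖outerVec q‖ ^ 2 := by
  rw [← mul_pow, ← norm_relProduct, Complex.sq_norm, Complex.normSq_apply]
  ring

theorem norm_innerVec_pos (h : 0 < (relProduct q).im) : 0 < ‖innerVec q‖ :=
  norm_pos_iff.2 fun h0 => by simp [relProduct, h0] at h

theorem norm_outerVec_pos (h : 0 < (relProduct q).im) : 0 < ‖outerVec q‖ :=
  norm_pos_iff.2 fun h0 => by simp [relProduct, h0] at h

theorem gramTensor_re (ν₁ ν₂ : ℝ) (q : Fin 4 → ℝ) :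
    (gramTensor ν₁ ν₂ q).re = gram₁₁ ν₁ ν₂ q - gram₂₂ ν₁ ν₂ q := by
  simp only [gramTensor, gram₁₁, gram₂₂, innerVec, outerVec, Complex.add_re, Complex.div_ofReal_re,
    sq, Complex.mul_re]
  ring

theorem gramTensor_im (ν₁ ν₂ : ℝ) (q : Fin 4 → ℝ) :
    (gramTensor ν₁ ν₂ q).im = 2 * (q 0 * q 1 / ν₂ + q 2 * q 3 / ν₁) := by
  simp only [gramTensor, innerVec, outerVec, Complex.add_im, Complex.div_ofReal_im, sq,
    Complex.mul_im]
  ring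

theorem gram₁₁_add_gram₂₂ (ν₁ ν₂ : ℝ) (q : Fin 4 → ℝ) :
    gram₁₁ ν₁ ν₂ q + gram₂₂ ν₁ ν₂ q = ‖outerVec q‖ ^ 2 / ν₁ + ‖innerVec q‖ ^ 2 / ν₂ := by
  rw [sq_norm_innerVec, sq_norm_outerVec, gram₁₁, gram₂₂]
  ring

theorem sq_norm_gramTensor (ν₁ ν₂ : ℝ) (q : Fin 4 → ℝ) :
    ‖gramTensor ν₁ ν₂ q‖ ^ 2 = (‖outerVec q‖ ^ 2 / ν₁ - ‖innerVec q‖ ^ 2 / ν₂) ^ 2 +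
      4 * (relProduct q).re ^ 2 / (ν₁ * ν₂) := by
  rw [Complex.sq_norm, Complex.normSq_apply, gramTensor_re, gramTensor_im, sq_norm_innerVec,
    sq_norm_outerVec, relProduct_re, gram₁₁, gram₂₂]
  ring

theorem norm_gramTensor_add_re_nonneg (ν₁ ν₂ : ℝ) (q : Fin 4 → ℝ) :
    0 ≤ ‖gramTensor ν₁ ν₂ q‖ + (gramTensor ν₁ ν₂ q).re := by
  linarith [neg_le_of_abs_le (Complex.abs_re_le_norm (gramTensor ν₁ ν₂ q))]

theorem sub_le_norm_gramTensor (hν₁ : 0 ≤ ν₁) (hν₂ : 0 ≤ ν₂) :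
    ‖outerVec q‖ ^ 2 / ν₁ - ‖innerVec q‖ ^ 2 / ν₂ ≤ ‖gramTensor ν₁ ν₂ q‖ := by
  refine le_of_sq_le_sq ?_ (norm_nonneg _)
  rw [sq_norm_gramTensor]
  exact le_add_of_nonneg_right (by positivity)

/-- If the Gram matrix is diagonal with its larger eigenvalue second, the energetically favourable
orientation, then a condition on the norms alone puts `q` in the cone where `L₃ = 0` is optimal. -/
theorem mul_gram₁₁_lt_mul_gram₂₂ {a b : ℝ} (hν₁ : 0 ≤ ν₁) (hν₂ : 0 ≤ ν₂) (ha : 0 ≤ a) (hb : 0 ≤ b)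
    (haligned : ‖gramTensor ν₁ ν₂ q‖ + (gramTensor ν₁ ν₂ q).re = 0)
    (hnorm : a * (‖innerVec q‖ ^ 2 / ν₂) < b * (‖outerVec q‖ ^ 2 / ν₁)) :
    a * gram₁₁ ν₁ ν₂ q < b * gram₂₂ ν₁ ν₂ q := by
  have hgap := sub_le_norm_gramTensor (q := q) hν₁ hν₂
  have hsum := gram₁₁_add_gram₂₂ ν₁ ν₂ q
  rw [gramTensor_re] at haligned
  calc a * gram₁₁ ν₁ ν₂ q ≤ a * (‖innerVec q‖ ^ 2 / ν₂) := by gcongr; linarith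
    _ < b * (‖outerVec q‖ ^ 2 / ν₁) := hnorm
    _ ≤ b * gram₂₂ ν₁ ν₂ q := by gcongr; linarith

theorem eq_of_re_div_im_eq_of_norm_eq {c c' : ℂ} (hc : 0 < c.im) (hc' : 0 < c'.im)
    (hratio : c'.re / c'.im = c.re / c.im) (hnorm : ‖c'‖ = ‖c‖) : c' = c := by
  have hscale : c' = (c'.im / c.im : ℝ) * c := by
    apply Complex.ext
    · rw [Complex.re_ofReal_mul]
      field_simp at hratio ⊢
      exact hratio
    · rw [Complex.im_ofReal_mul, div_mul_cancel₀ _ hc.ne']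
  have hcpos : ‖c‖ ≠ 0 := norm_ne_zero_iff.2 fun h => by simp [h] at hc
  rw [hscale, norm_mul, Complex.norm_real, Real.norm_of_nonneg (by positivity)] at hnorm
  rw [hscale, mul_eq_right₀ hcpos |>.1 hnorm, Complex.ofReal_one, one_mul]

/-- The two configurations differ by a rotation `e`, and `e ^ 2` rotates one aligned Gram tensor
into the other. -/
theorem eq_of_relProduct_eq_of_aligned (hν₁ : 0 ≤ ν₁) (hν₂ : 0 ≤ ν₂) (hq : 0 < (relProduct q).im)
    (hlt : ‖innerVec q‖ ^ 2 / ν₂ < ‖outerVec q‖ ^ 2 / ν₁) (hin : ‖innerVec q'‖ = ‖innerVec q‖)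
    (hrel : relProduct q' = relProduct q)
    (haligned : ‖gramTensor ν₁ ν₂ q‖ + (gramTensor ν₁ ν₂ q).re = 0)
    (haligned' : ‖gramTensor ν₁ ν₂ q'‖ + (gramTensor ν₁ ν₂ q').re = 0)
    (him : 0 < q 3) (him' : 0 < q' 3) : q' = q := by
  have hx : innerVec q ≠ 0 := norm_pos_iff.1 (norm_innerVec_pos hq)
  obtain ⟨e, he⟩ : ∃ e : ℂ, innerVec q' = e * innerVec q :=
    ⟨_, (div_mul_cancel₀ (innerVec q') hx).symm⟩
  have henorm : ‖e‖ = 1 := by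
    rw [he, norm_mul] at hin
    exact (mul_eq_right₀ (norm_ne_zero_iff.2 hx)).1 hin
  have hee : e * conj e = 1 := by rw [Complex.mul_conj, Complex.normSq_eq_norm_sq, henorm]; simp
  have hy : outerVec q' = e * outerVec q := by
    have hxc : conj (innerVec q) ≠ 0 := (map_ne_zero _).2 hx
    have hrot : conj e * outerVec q' = outerVec q := mul_left_cancel₀ hxc <| by
      simpa [relProduct, he, mul_comm, mul_left_comm, mul_assoc] using hrel
    rw [← hrot, ← mul_assoc, hee, one_mul]
  have htensor : gramTensor ν₁ ν₂ q' = e ^ 2 * gramTensor ν₁ ν₂ q := by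
    rw [gramTensor, gramTensor, he, hy]
    ring
  have htensor_ne : gramTensor ν₁ ν₂ q ≠ 0 := norm_pos_iff.1 <|
    (sub_pos.2 hlt).trans_le (sub_le_norm_gramTensor hν₁ hν₂)
  have htensor_eq : ∀ z : ℂ, ‖z‖ + z.re = 0 → z = -(‖z‖ : ℂ) := fun z hz =>
    RCLike.re_le_neg_norm_iff_eq_neg_norm.1 (eq_neg_of_add_eq_zero_right hz).le
  have hsq : e ^ 2 = 1 := (mul_eq_right₀ htensor_ne).1 <| by
    rw [← htensor, htensor_eq _ haligned', htensor_eq _ haligned, htensor, norm_mul, norm_pow,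
      henorm, one_pow, one_mul]
  rcases sq_eq_one_iff.1 hsq with rfl | rfl
  · rw [one_mul] at he hy
    ext i
    fin_cases i
    exacts [congrArg Complex.re he, congrArg Complex.im he, congrArg Complex.re hy,
      congrArg Complex.im hy]
  · have hflip : q' 3 = -q 3 := by simpa [outerVec] using congrArg Complex.im hy
    exact absurd him' (by linarith)

end ComplexConfiguration

section ShapeCoordinates

/-- The rescaled shape `(X, Y, T)` of a configuration: the inverse lengths of `x` and `y`, and `X`
times the cotangent of the angle between them, in units in which the circular Kepler solution is
`(1, 1, 0)`. -/
def scaledShape (ℓ w : ℝ) (q : Fin 4 → ℝ) : ℝ × ℝ × ℝ :=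
  (ℓ * w / ‖innerVec q‖, ℓ / ‖outerVec q‖,
    ℓ * w / ‖innerVec q‖ * ((relProduct q).re / (relProduct q).im))

/-- The deviation `Ψ` of the rescaled effective potential from its quadratic part, with
`χ = ν₁ / ν₂`. -/
def perturbation (χ m₁ m₂ m₃ : ℝ) (v : ℝ × ℝ × ℝ × ℝ) : ℝ :=
  kineticPerturbation χ (m₁ * (m₂ + m₃) / (m₂ * m₃)) v + v.1 * potentialPerturbation m₁ m₂ m₃ v

variable {ν₁ ν₂ μ₁ μ₂ m₁ m₂ m₃ g₁ g₂ ℓ w : ℝ} {q q' : Fin 4 → ℝ}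

theorem sepRatio_scaledShape (hℓ : ℓ ≠ 0) (hw : w ≠ 0) (q : Fin 4 → ℝ) :
    sepRatio (w, scaledShape ℓ w q) = ‖innerVec q‖ / ‖outerVec q‖ := by
  simp only [sepRatio, scaledShape]
  rw [div_div_eq_mul_div]
  field_simp

theorem sq_scaledShape_add_sq (hq : 0 < (relProduct q).im) :
    (scaledShape ℓ w q).1 ^ 2 + (scaledShape ℓ w q).2.2 ^ 2 =
      (ℓ * w * ‖outerVec q‖ / (relProduct q).im) ^ 2 := by
  have hr := norm_innerVec_pos hq
  have hpyth := sq_re_add_sq_im_relProduct q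
  simp only [scaledShape]
  field_simp
  linear_combination (ℓ * w) ^ 2 * hpyth

theorem cosAngle_scaledShape (hℓ : 0 < ℓ) (hw : 0 < w) (hq : 0 < (relProduct q).im) :
    cosAngle (w, scaledShape ℓ w q) =
      (relProduct q).re / (‖innerVec q‖ * ‖outerVec q‖) := by
  have hr := norm_innerVec_pos hq
  have hρ := norm_outerVec_pos hq
  rw [cosAngle, sq_scaledShape_add_sq hq, Real.sqrt_sq (by positivity), scaledShape]
  field_simp

/-- The larger eigenvalue of the Gram matrix. -/
def gramEigenvalue (ν₁ ν₂ : ℝ) (q : Fin 4 → ℝ) : ℝ :=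
  (‖outerVec q‖ ^ 2 / ν₁ + ‖innerVec q‖ ^ 2 / ν₂ + ‖gramTensor ν₁ ν₂ q‖) / 2

theorem gram₂₂_eq_gramEigenvalue_sub (ν₁ ν₂ : ℝ) (q : Fin 4 → ℝ) :
    gram₂₂ ν₁ ν₂ q = gramEigenvalue ν₁ ν₂ q -
      (‖gramTensor ν₁ ν₂ q‖ + (gramTensor ν₁ ν₂ q).re) / 2 := by
  rw [gramEigenvalue, gramTensor_re, ← gram₁₁_add_gram₂₂]
  ring

theorem gram₁₁_eq_div_gramEigenvalue_add (hν₁ : 0 < ν₁) (hν₂ : 0 < ν₂)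
    (hq : 0 < (relProduct q).im) :
    gram₁₁ ν₁ ν₂ q = (relProduct q).im ^ 2 / (ν₁ * ν₂ * gramEigenvalue ν₁ ν₂ q) +
      (‖gramTensor ν₁ ν₂ q‖ + (gramTensor ν₁ ν₂ q).re) / 2 := by
  have hρ := norm_outerVec_pos hq
  have hpos : 0 < gramEigenvalue ν₁ ν₂ q := by unfold gramEigenvalue; positivity
  have hsmall : gram₁₁ ν₁ ν₂ q - (‖gramTensor ν₁ ν₂ q‖ + (gramTensor ν₁ ν₂ q).re) / 2 =
      (‖outerVec q‖ ^ 2 / ν₁ + ‖innerVec q‖ ^ 2 / ν₂ - ‖gramTensor ν₁ ν₂ q‖) / 2 := by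
    rw [gramTensor_re, ← gram₁₁_add_gram₂₂]
    ring
  have hdet : (‖outerVec q‖ ^ 2 / ν₁ + ‖innerVec q‖ ^ 2 / ν₂ - ‖gramTensor ν₁ ν₂ q‖) / 2 *
      gramEigenvalue ν₁ ν₂ q = (relProduct q).im ^ 2 / (ν₁ * ν₂) := by
    rw [gramEigenvalue]
    linear_combination -sq_norm_gramTensor ν₁ ν₂ q / 4 -
      sq_re_add_sq_im_relProduct q / (ν₁ * ν₂)
  rw [← sub_eq_iff_eq_add, hsmall, ← div_div, ← hdet, mul_div_cancel_right₀ _ hpos.ne']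

theorem topEigenvalue_scaledShape (hν₁ : 0 < ν₁) (hν₂ : 0 < ν₂) (hℓ : 0 < ℓ) (hw : 0 < w)
    (hq : 0 < (relProduct q).im) :
    topEigenvalue (ν₁ / ν₂ * sepRatio (w, scaledShape ℓ w q) ^ 2)
        (cosAngle (w, scaledShape ℓ w q)) =
      gramEigenvalue ν₁ ν₂ q / (‖outerVec q‖ ^ 2 / ν₁) := by
  have hr := norm_innerVec_pos hq
  have hρ := norm_outerVec_pos hq
  have hdisc : (1 - ν₁ / ν₂ * (‖innerVec q‖ / ‖outerVec q‖) ^ 2) ^ 2 +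
      4 * (ν₁ / ν₂ * (‖innerVec q‖ / ‖outerVec q‖) ^ 2) *
        ((relProduct q).re / (‖innerVec q‖ * ‖outerVec q‖)) ^ 2 =
      (‖gramTensor ν₁ ν₂ q‖ / (‖outerVec q‖ ^ 2 / ν₁)) ^ 2 := by
    rw [div_pow ‖gramTensor ν₁ ν₂ q‖, sq_norm_gramTensor]
    field_simp
  rw [sepRatio_scaledShape hℓ.ne' hw.ne', cosAngle_scaledShape hℓ hw hq, topEigenvalue, hdisc,
    Real.sqrt_sq (by positivity), gramEigenvalue]
  field_simp

theorem centrifugal_eq_kinetic_add (hν₁ : 0 < ν₁) (hν₂ : 0 < ν₂) (hℓ : 0 < ℓ) (hw : 0 < w)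
    (hg₁ : g₁ ≠ 0) (hμ₁ : μ₁ ^ 2 = ν₂ * ℓ * g₂) (hμ₂ : μ₂ ^ 2 = w * ν₁ * ℓ * g₁)
    (hq : 0 < (relProduct q).im) :
    let z := scaledShape ℓ w q
    let P := topEigenvalue (ν₁ / ν₂ * sepRatio (w, z) ^ 2) (cosAngle (w, z))
    (μ₁ ^ 2 * gram₁₁ ν₁ ν₂ q + μ₂ ^ 2 * gram₂₂ ν₁ ν₂ q) / (2 * (relProduct q).im ^ 2) =
      g₁ / (ℓ * w) * ((z.1 ^ 2 + z.2.2 ^ 2) * P / 2 + g₂ / g₁ * w * z.2.1 ^ 2 / (2 * P)) +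
        (μ₁ ^ 2 - μ₂ ^ 2) / (4 * (relProduct q).im ^ 2) *
          (‖gramTensor ν₁ ν₂ q‖ + (gramTensor ν₁ ν₂ q).re) := by
  have hρ := norm_outerVec_pos hq
  have hpos : 0 < gramEigenvalue ν₁ ν₂ q := by unfold gramEigenvalue; positivity
  intro z P
  rw [show P = _ from topEigenvalue_scaledShape hν₁ hν₂ hℓ hw hq, sq_scaledShape_add_sq hq,
    gram₁₁_eq_div_gramEigenvalue_add hν₁ hν₂ hq, gram₂₂_eq_gramEigenvalue_sub]
  generalize (‖gramTensor ν₁ ν₂ q‖ + (gramTensor ν₁ ν₂ q).re) = N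
  simp only [z, scaledShape]
  rw [hμ₁, hμ₂]
  field_simp
  ring

theorem Vnewt_eq_potentialPerturbation (hm₂ : 0 < m₂) (hm₃ : 0 < m₃) (hℓ : 0 < ℓ) (hw : 0 < w)
    (hq : 0 < (relProduct q).im) :
    let z := scaledShape ℓ w q
    Vnewt m₁ m₂ m₃ ![q 0 ^ 2 + q 1 ^ 2, q 2 ^ 2 + q 3 ^ 2, q 0 * q 2 + q 1 * q 3] =
      m₂ * m₃ / (ℓ * w) * (-z.1 - m₁ * (m₂ + m₃) / (m₂ * m₃) * w * z.2.1 +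
        w ^ 3 * potentialPerturbation m₁ m₂ m₃ (w, z)) := by
  intro z
  have hr := norm_innerVec_pos hq
  have hρ := norm_outerVec_pos hq
  have hre : (relProduct q).re = ‖innerVec q‖ * ‖outerVec q‖ * cosAngle (w, z) := by
    rw [cosAngle_scaledShape hℓ hw hq, mul_div_cancel₀ _ (by positivity)]
  rw [← sq_norm_innerVec, ← sq_norm_outerVec, ← relProduct_re, hre,
    Vnewt_eq_multipole m₁ (by positivity) hr hρ
      (sq_cosAngle_lt_one _ _ _ (by simp only [scaledShape]; positivity)),
    potentialPerturbation, sepRatio_scaledShape hℓ.ne' hw.ne']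
  generalize pairRemainder m₂ m₃ _ _ = R
  simp only [z, scaledShape]
  field_simp

theorem effectivePotential_eq_normalForm (hν₁ : 0 < ν₁) (hν₂ : 0 < ν₂) (hm₂ : 0 < m₂)
    (hm₃ : 0 < m₃) (hℓ : 0 < ℓ) (hw : 0 < w) (hμ₁ : μ₁ ^ 2 = ν₂ * ℓ * (m₁ * (m₂ + m₃)))
    (hμ₂ : μ₂ ^ 2 = w * ν₁ * ℓ * (m₂ * m₃)) (hq : 0 < (relProduct q).im)
    (hlt : ‖innerVec q‖ ^ 2 / ν₂ < ‖outerVec q‖ ^ 2 / ν₁) :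
    effectivePotential ν₁ ν₂ μ₁ μ₂ (Vnewt m₁ m₂ m₃) q =
      m₂ * m₃ / (ℓ * w) * (normalForm (m₁ * (m₂ + m₃) / (m₂ * m₃))
        (perturbation (ν₁ / ν₂) m₁ m₂ m₃) w (scaledShape ℓ w q) -
          (1 + m₁ * (m₂ + m₃) / (m₂ * m₃) * w) / 2) +
        (μ₁ ^ 2 - μ₂ ^ 2) / (4 * (relProduct q).im ^ 2) *
          (‖gramTensor ν₁ ν₂ q‖ + (gramTensor ν₁ ν₂ q).re) := by
  have hr := norm_innerVec_pos hq
  have hρ := norm_outerVec_pos hq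
  have hb : ν₁ / ν₂ * sepRatio (w, scaledShape ℓ w q) ^ 2 < 1 := by
    rw [sepRatio_scaledShape hℓ.ne' hw.ne']
    rw [div_lt_div_iff₀ hν₂ hν₁] at hlt
    field_simp
    linarith
  have hkinetic := kinetic_eq_add_kineticPerturbation (m₁ * (m₂ + m₃) / (m₂ * m₃)) w
    (scaledShape ℓ w q).2.1 (scaledShape ℓ w q).2.2 (div_pos hν₁ hν₂).le
    (show (scaledShape ℓ w q).1 ≠ 0 by simp only [scaledShape]; positivity) hb
  rw [effectivePotential, ← relProduct_im,
    centrifugal_eq_kinetic_add hν₁ hν₂ hℓ hw (by positivity) hμ₁ hμ₂ hq,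
    Vnewt_eq_potentialPerturbation hm₂ hm₃ hℓ hw hq, hkinetic, normalForm, perturbation]
  ring

theorem norm_eq_and_relProduct_eq_of_scaledShape_eq (hℓ : ℓ ≠ 0) (hw : w ≠ 0)
    (hq : 0 < (relProduct q).im) (hq' : 0 < (relProduct q').im)
    (h : scaledShape ℓ w q' = scaledShape ℓ w q) :
    ‖innerVec q'‖ = ‖innerVec q‖ ∧ relProduct q' = relProduct q := by
  simp only [scaledShape, Prod.mk.injEq] at h
  obtain ⟨hX, hY, hT⟩ := h
  have hr : ‖innerVec q'‖ = ‖innerVec q‖ := by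
    simpa [div_eq_mul_inv, hℓ, hw] using hX
  have hρ : ‖outerVec q'‖ = ‖outerVec q‖ := by simpa [div_eq_mul_inv, hℓ] using hY
  have hX0 : ℓ * w / ‖innerVec q‖ ≠ 0 :=
    div_ne_zero (mul_ne_zero hℓ hw) (norm_innerVec_pos hq).ne'
  refine ⟨hr, eq_of_re_div_im_eq_of_norm_eq hq hq' ?_ ?_⟩
  · exact mul_left_cancel₀ hX0 (hX ▸ hT)
  · rw [norm_relProduct, norm_relProduct, hr, hρ]

theorem continuous_innerVec : Continuous innerVec := by
  unfold innerVec
  simp only [Complex.mk_eq_add_mul_I]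
  fun_prop

theorem continuous_outerVec : Continuous outerVec := by
  unfold outerVec
  simp only [Complex.mk_eq_add_mul_I]
  fun_prop

theorem continuous_relProduct : Continuous relProduct :=
  (Complex.continuous_conj.comp continuous_innerVec).mul continuous_outerVec

theorem continuousAt_scaledShape (hq : 0 < (relProduct q).im) :
    ContinuousAt (scaledShape ℓ w) q := by
  have := (norm_innerVec_pos hq).ne'
  have := (norm_outerVec_pos hq).ne'
  have := continuous_innerVec
  have := continuous_outerVec
  have := continuous_relProduct
  unfold scaledShape
  fun_prop (disch := first | assumption | exact hq.ne')

/-- The term `‖ζ‖ + ζ.re`, for the Gram tensor `ζ`, is nonnegative and vanishes at `q`; on the fibre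
of the rotations of `q` it singles out `q`. -/
theorem IsStrictLocalMin.effectivePotential_of_normalForm (hν₁ : 0 < ν₁) (hν₂ : 0 < ν₂)
    (hm₂ : 0 < m₂) (hm₃ : 0 < m₃) (hℓ : 0 < ℓ) (hw : 0 < w) (hμ₂_pos : 0 < μ₂) (hμ : μ₂ < μ₁)
    (hμ₁ : μ₁ ^ 2 = ν₂ * ℓ * (m₁ * (m₂ + m₃))) (hμ₂ : μ₂ ^ 2 = w * ν₁ * ℓ * (m₂ * m₃))
    (hq : 0 < (relProduct q).im) (him : 0 < q 3)
    (hlt : ‖innerVec q‖ ^ 2 / ν₂ < ‖outerVec q‖ ^ 2 / ν₁)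
    (haligned : ‖gramTensor ν₁ ν₂ q‖ + (gramTensor ν₁ ν₂ q).re = 0)
    (hmin : IsStrictLocalMin (normalForm (m₁ * (m₂ + m₃) / (m₂ * m₃))
      (perturbation (ν₁ / ν₂) m₁ m₂ m₃) w) (scaledShape ℓ w q)) :
    IsStrictLocalMin (effectivePotential ν₁ ν₂ μ₁ μ₂ (Vnewt m₁ m₂ m₃)) q := by
  set c := (1 + m₁ * (m₂ + m₃) / (m₂ * m₃) * w) / 2
  have hmono : StrictMono fun t : ℝ => m₂ * m₃ / (ℓ * w) * (t - c) := fun s t hst =>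
    mul_lt_mul_of_pos_left (sub_lt_sub_right hst c) (by positivity)
  have heq {q'} := effectivePotential_eq_normalForm (q := q') hν₁ hν₂ hm₂ hm₃ hℓ hw hμ₁ hμ₂
  have hcoef {q'} (hq' : 0 < (relProduct q').im) :
      0 < (μ₁ ^ 2 - μ₂ ^ 2) / (4 * (relProduct q').im ^ 2) :=
    div_pos (by nlinarith) (by positivity)
  have hnear : ∀ᶠ q' in 𝓝 q, 0 < (relProduct q').im ∧
      ‖innerVec q'‖ ^ 2 / ν₂ < ‖outerVec q'‖ ^ 2 / ν₁ ∧ 0 < q' 3 := by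
    have := continuous_innerVec
    have := continuous_outerVec
    refine (ContinuousAt.eventually_lt (by fun_prop) (by fun_prop) hq).and <|
      (ContinuousAt.eventually_lt (by fun_prop) (by fun_prop) hlt).and <|
        (continuous_apply 3).continuousAt.eventually_const_lt him
  refine (hmin.strictMono_comp hmono).of_comp_le (continuousAt_scaledShape hq) ?_ ?_ ?_
  · rw [heq hq hlt, haligned, mul_zero, add_zero, Function.comp_apply]
  · filter_upwards [hnear] with q' ⟨hq', hlt', _⟩
    rw [heq hq' hlt', Function.comp_apply]
    exact le_add_of_nonneg_right
      (mul_nonneg (hcoef hq').le (norm_gramTensor_add_re_nonneg ν₁ ν₂ q'))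
  · filter_upwards [nhdsWithin_le_nhds hnear, self_mem_nhdsWithin]
      with q' ⟨hq', hlt', him'⟩ hne hfib
    obtain ⟨hr, hrel⟩ := norm_eq_and_relProduct_eq_of_scaledShape_eq hℓ.ne' hw.ne' hq hq' hfib
    have hmisaligned : ‖gramTensor ν₁ ν₂ q'‖ + (gramTensor ν₁ ν₂ q').re ≠ 0 := fun haligned' =>
      hne <| eq_of_relProduct_eq_of_aligned hν₁.le hν₂.le hq hlt hr hrel haligned haligned' him him'
    rw [heq hq hlt, heq hq' hlt', hfib, haligned, mul_zero, add_zero]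
    exact lt_add_of_pos_right _ (mul_pos (hcoef hq')
      ((norm_gramTensor_add_re_nonneg ν₁ ν₂ q').lt_of_ne' hmisaligned))

end ShapeCoordinates

section Configuration

open ComplexConjugate

/-- The unit complex number of positive real part whose square rotates `ξ` to the positive real
axis, for `ξ` off the negative real axis. -/
def halfAngleRotation (ξ : ℂ) : ℂ :=
  (‖ξ‖ + conj ξ) / ‖‖ξ‖ + ξ‖

/-- The unit vector in the direction of `x` relative to `-i y`, in the coordinates
`v = (w, X, Y, T)`. -/
def relDirection (v : ℝ × ℝ × ℝ × ℝ) : ℂ :=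
  (v.2.1 + v.2.2.2 * Complex.I) / √(v.2.1 ^ 2 + v.2.2.2 ^ 2)

/-- The rotation making the Gram tensor of the configuration with coordinates `v = (w, X, Y, T)`
a negative real number, for `χ = ν₁ / ν₂`. -/
def aligningRotation (χ : ℝ) (v : ℝ × ℝ × ℝ × ℝ) : ℂ :=
  halfAngleRotation (1 - χ * sepRatio v ^ 2 * relDirection v ^ 2)

/-- The aligned configuration with `scaledShape ℓ w = (X, Y, T)`, for `v = (w, X, Y, T)`. -/
def configuration (χ ℓ : ℝ) (v : ℝ × ℝ × ℝ × ℝ) : Fin 4 → ℝ :=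
  ![ℓ * v.1 / v.2.1 * (aligningRotation χ v * relDirection v).re,
    ℓ * v.1 / v.2.1 * (aligningRotation χ v * relDirection v).im,
    -(ℓ / v.2.2.1 * (aligningRotation χ v).im), ℓ / v.2.2.1 * (aligningRotation χ v).re]

variable {ξ : ℂ} {χ ν₁ ν₂ ℓ w X Y T : ℝ} {v : ℝ × ℝ × ℝ × ℝ}

theorem norm_add_self_pos (hξ : 0 < ξ.re) : 0 < ‖(‖ξ‖ : ℂ) + ξ‖ := by
  refine norm_pos_iff.2 fun h => ?_
  have hre := congrArg Complex.re h
  rw [Complex.add_re, Complex.ofReal_re, Complex.zero_re] at hre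
  linarith [norm_nonneg ξ]

theorem norm_halfAngleRotation (hξ : 0 < ξ.re) : ‖halfAngleRotation ξ‖ = 1 := by
  have hconj : (‖ξ‖ : ℂ) + conj ξ = conj (‖ξ‖ + ξ) := by simp
  rw [halfAngleRotation, hconj, norm_div, RCLike.norm_conj, Complex.norm_real, norm_norm,
    div_self (norm_add_self_pos hξ).ne']

theorem halfAngleRotation_re_pos (hξ : 0 < ξ.re) : 0 < (halfAngleRotation ξ).re := by
  have := norm_add_self_pos hξ
  rw [halfAngleRotation, Complex.div_ofReal_re, Complex.add_re, Complex.ofReal_re, Complex.conj_re]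
  positivity

theorem halfAngleRotation_im (ξ : ℂ) :
    (halfAngleRotation ξ).im = -ξ.im / ‖(‖ξ‖ : ℂ) + ξ‖ := by
  simp [halfAngleRotation, Complex.div_ofReal_im]

theorem sq_halfAngleRotation_mul (hξ : 0 < ξ.re) : halfAngleRotation ξ ^ 2 * ξ = ‖ξ‖ := by
  have hne : ((‖(‖ξ‖ : ℂ) + ξ‖ : ℝ) : ℂ) ≠ 0 := mod_cast (norm_add_self_pos hξ).ne'
  have hmul : ξ * conj ξ = (‖ξ‖ : ℂ) ^ 2 := Complex.mul_conj' ξ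
  have hsum : ((‖ξ‖ : ℂ) + ξ) * (‖ξ‖ + conj ξ) = (‖(‖ξ‖ : ℂ) + ξ‖ : ℂ) ^ 2 := by
    rw [← Complex.mul_conj', map_add, Complex.conj_ofReal]
  rw [halfAngleRotation, div_pow, div_mul_eq_mul_div, div_eq_iff (pow_ne_zero 2 hne), ← hsum]
  linear_combination (conj ξ + ‖ξ‖) * hmul

theorem norm_relDirection (hX : v.2.1 ≠ 0) : ‖relDirection v‖ = 1 := by
  have hpos : 0 < √(v.2.1 ^ 2 + v.2.2.2 ^ 2) := Real.sqrt_pos.2 (by positivity)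
  rw [relDirection, norm_div, Complex.norm_add_mul_I, Complex.norm_real,
    Real.norm_of_nonneg hpos.le, div_self hpos.ne']

theorem relDirection_re (v : ℝ × ℝ × ℝ × ℝ) :
    (relDirection v).re = v.2.1 / √(v.2.1 ^ 2 + v.2.2.2 ^ 2) := by
  simp [relDirection, Complex.div_ofReal_re]

theorem relDirection_im (v : ℝ × ℝ × ℝ × ℝ) :
    (relDirection v).im = v.2.2.2 / √(v.2.1 ^ 2 + v.2.2.2 ^ 2) := by
  simp [relDirection, Complex.div_ofReal_im]

theorem one_sub_mul_sq_relDirection_re_pos (hχ : 0 ≤ χ) (hX : v.2.1 ≠ 0)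
    (hb : χ * sepRatio v ^ 2 < 1) :
    0 < (1 - χ * sepRatio v ^ 2 * relDirection v ^ 2 : ℂ).re := by
  have hle : (relDirection v ^ 2).re ≤ 1 :=
    (Complex.re_le_norm _).trans_eq (by rw [norm_pow, norm_relDirection hX, one_pow])
  have hre : (1 - χ * sepRatio v ^ 2 * relDirection v ^ 2 : ℂ).re =
      1 - χ * sepRatio v ^ 2 * (relDirection v ^ 2).re := by
    rw [← Complex.re_ofReal_mul]
    simp
  rw [hre, sub_pos]
  exact (mul_le_of_le_one_right (by positivity) hle).trans_lt hb

theorem innerVec_configuration (χ ℓ : ℝ) (v : ℝ × ℝ × ℝ × ℝ) :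
    innerVec (configuration χ ℓ v) =
      (ℓ * v.1 / v.2.1 : ℝ) * (aligningRotation χ v * relDirection v) := by
  apply Complex.ext
  · rw [Complex.re_ofReal_mul]; rfl
  · rw [Complex.im_ofReal_mul]; rfl

theorem outerVec_configuration (χ ℓ : ℝ) (v : ℝ × ℝ × ℝ × ℝ) :
    outerVec (configuration χ ℓ v) =
      (ℓ / v.2.2.1 : ℝ) * (Complex.I * aligningRotation χ v) := by
  apply Complex.ext
  · rw [Complex.re_ofReal_mul, Complex.I_mul_re, mul_neg]; rfl
  · rw [Complex.im_ofReal_mul, Complex.I_mul_im]; rfl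

theorem relProduct_configuration (he : ‖aligningRotation χ v‖ = 1) :
    relProduct (configuration χ ℓ v) =
      (ℓ * v.1 / v.2.1 * (ℓ / v.2.2.1) : ℝ) * (Complex.I * conj (relDirection v)) := by
  have hee : conj (aligningRotation χ v) * aligningRotation χ v = 1 := by
    rw [Complex.conj_mul', he]
    norm_num
  rw [relProduct, innerVec_configuration, outerVec_configuration, map_mul, map_mul,
    Complex.conj_ofReal]
  push_cast
  linear_combination ((ℓ * v.1 / v.2.1 * (ℓ / v.2.2.1) : ℂ) *
    (Complex.I * conj (relDirection v))) * hee

theorem norm_innerVec_configuration (hℓ : 0 < ℓ) (hw : 0 < w) (hX : 0 < X)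
    (he : ‖aligningRotation χ (w, X, Y, T)‖ = 1) :
    ‖innerVec (configuration χ ℓ (w, X, Y, T))‖ = ℓ * w / X := by
  rw [innerVec_configuration, norm_mul, norm_mul, he, norm_relDirection hX.ne', Complex.norm_real,
    Real.norm_of_nonneg (by positivity), one_mul, mul_one]

theorem norm_outerVec_configuration (hℓ : 0 < ℓ) (hY : 0 < Y)
    (he : ‖aligningRotation χ (w, X, Y, T)‖ = 1) :
    ‖outerVec (configuration χ ℓ (w, X, Y, T))‖ = ℓ / Y := by
  rw [outerVec_configuration, norm_mul, norm_mul, he, Complex.norm_I, Complex.norm_real,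
    Real.norm_of_nonneg (by positivity), one_mul, mul_one]

theorem relProduct_configuration_im (he : ‖aligningRotation χ (w, X, Y, T)‖ = 1) :
    (relProduct (configuration χ ℓ (w, X, Y, T))).im =
      ℓ * w / X * (ℓ / Y) * (X / √(X ^ 2 + T ^ 2)) := by
  rw [relProduct_configuration he, Complex.im_ofReal_mul, Complex.I_mul_im, Complex.conj_re,
    relDirection_re]

theorem relProduct_configuration_re (he : ‖aligningRotation χ (w, X, Y, T)‖ = 1) :
    (relProduct (configuration χ ℓ (w, X, Y, T))).re =
      ℓ * w / X * (ℓ / Y) * (T / √(X ^ 2 + T ^ 2)) := by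
  rw [relProduct_configuration he, Complex.re_ofReal_mul, Complex.I_mul_re, Complex.conj_im,
    relDirection_im, neg_neg]

theorem scaledShape_configuration (hℓ : 0 < ℓ) (hw : 0 < w) (hX : 0 < X) (hY : 0 < Y)
    (he : ‖aligningRotation χ (w, X, Y, T)‖ = 1) :
    scaledShape ℓ w (configuration χ ℓ (w, X, Y, T)) = (X, Y, T) := by
  rw [scaledShape, norm_innerVec_configuration hℓ hw hX he, norm_outerVec_configuration hℓ hY he,
    relProduct_configuration_re he, relProduct_configuration_im he]
  have : 0 < √(X ^ 2 + T ^ 2) := Real.sqrt_pos.2 (by positivity)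
  ext <;> field_simp

theorem gramTensor_configuration (hν₁ : ν₁ ≠ 0) (hY : v.2.2.1 ≠ 0)
    (hre : 0 < (1 - (ν₁ / ν₂ : ℝ) * sepRatio v ^ 2 * relDirection v ^ 2 : ℂ).re) :
    gramTensor ν₁ ν₂ (configuration (ν₁ / ν₂) ℓ v) = (-((ℓ / v.2.2.1) ^ 2 / ν₁ *
      ‖(1 - (ν₁ / ν₂ : ℝ) * sepRatio v ^ 2 * relDirection v ^ 2 : ℂ)‖) : ℝ) := by
  have hsq := sq_halfAngleRotation_mul hre
  have hν₁' : (ν₁ : ℂ) ≠ 0 := mod_cast hν₁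
  have hY' : (v.2.2.1 : ℂ) ≠ 0 := mod_cast hY
  have hscale : (ℓ * v.1 / v.2.1 : ℂ) ^ 2 / ν₂ =
      (ℓ / v.2.2.1) ^ 2 / ν₁ * (ν₁ / ν₂ * sepRatio v ^ 2) := by
    rw [sepRatio]
    push_cast
    field_simp
  rw [gramTensor, innerVec_configuration, outerVec_configuration, aligningRotation]
  push_cast at hsq ⊢
  rw [← hsq]
  generalize halfAngleRotation _ = e
  linear_combination e ^ 2 * relDirection v ^ 2 * hscale +
    ((ℓ / v.2.2.1) ^ 2 * e ^ 2 / ν₁ : ℂ) * Complex.I_sq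

theorem aligned_configuration (hν₁ : 0 < ν₁) (hY : v.2.2.1 ≠ 0)
    (hre : 0 < (1 - (ν₁ / ν₂ : ℝ) * sepRatio v ^ 2 * relDirection v ^ 2 : ℂ).re) :
    ‖gramTensor ν₁ ν₂ (configuration (ν₁ / ν₂) ℓ v)‖ +
      (gramTensor ν₁ ν₂ (configuration (ν₁ / ν₂) ℓ v)).re = 0 := by
  rw [gramTensor_configuration hν₁.ne' hY hre, Complex.norm_real, Complex.ofReal_re, norm_neg,
    Real.norm_of_nonneg (by positivity), add_neg_cancel]

/-- The hypotheses say that the angular momenta are those for which the circular Kepler solutions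
of the two binary problems have separations `ℓ * w` and `ℓ`. -/
theorem isStrictLocalMin_Hred_configuration {m₁ m₂ m₃ μ₁ μ₂ : ℝ} (hν₁ : 0 < ν₁) (hν₂ : 0 < ν₂)
    (hm₂ : 0 < m₂) (hm₃ : 0 < m₃) (hℓ : 0 < ℓ) (hw : 0 < w) (hμ₂_pos : 0 < μ₂) (hμ : μ₂ < μ₁)
    (hμ₁ : μ₁ ^ 2 = ν₂ * ℓ * (m₁ * (m₂ + m₃))) (hμ₂ : μ₂ ^ 2 = w * ν₁ * ℓ * (m₂ * m₃))
    (hX : 0 < X) (hY : 0 < Y) (hcone : m₁ * (m₂ + m₃) / (m₂ * m₃) * w * Y ^ 2 < X ^ 2)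
    (hb : ν₁ / ν₂ * sepRatio (w, X, Y, T) ^ 2 < 1)
    (hmin : IsStrictLocalMin (normalForm (m₁ * (m₂ + m₃) / (m₂ * m₃))
      (perturbation (ν₁ / ν₂) m₁ m₂ m₃) w) (X, Y, T)) :
    IsStrictLocalMin (Hred ν₁ ν₂ μ₁ μ₂ (Vnewt m₁ m₂ m₃))
      (configuration (ν₁ / ν₂) ℓ (w, X, Y, T), 0) := by
  have hre := one_sub_mul_sq_relDirection_re_pos (v := (w, X, Y, T)) (div_pos hν₁ hν₂).le hX.ne' hb
  have he : ‖aligningRotation (ν₁ / ν₂) (w, X, Y, T)‖ = 1 := norm_halfAngleRotation hre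
  have haligned := aligned_configuration (v := (w, X, Y, T)) (ℓ := ℓ) hν₁ hY.ne' hre
  have hr := norm_innerVec_configuration hℓ hw hX he
  have hρ := norm_outerVec_configuration (w := w) (X := X) (T := T) hℓ hY he
  have hq : 0 < (relProduct (configuration (ν₁ / ν₂) ℓ (w, X, Y, T))).im := by
    have : 0 < √(X ^ 2 + T ^ 2) := Real.sqrt_pos.2 (by positivity)
    rw [relProduct_configuration_im he]
    positivity
  have him : 0 < configuration (ν₁ / ν₂) ℓ (w, X, Y, T) 3 :=
    mul_pos (div_pos hℓ hY) (halfAngleRotation_re_pos hre)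
  have hlt : (ℓ * w / X) ^ 2 / ν₂ < (ℓ / Y) ^ 2 / ν₁ := by
    rw [sepRatio] at hb
    field_simp at hb ⊢
    exact hb
  have hnorm : μ₁ ^ 2 * ((ℓ * w / X) ^ 2 / ν₂) < μ₂ ^ 2 * ((ℓ / Y) ^ 2 / ν₁) := by
    rw [hμ₁, hμ₂]
    field_simp at hcone ⊢
    exact hcone
  rw [← hr, ← hρ] at hlt hnorm
  refine IsStrictLocalMin.Hred_of_effectivePotential hν₁ hν₂ hμ₂_pos hμ
    (mul_gram₁₁_lt_mul_gram₂₂ hν₁.le hν₂.le (sq_nonneg μ₁) (sq_nonneg μ₂) haligned hnorm) ?_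
  refine IsStrictLocalMin.effectivePotential_of_normalForm hν₁ hν₂ hm₂ hm₃ hℓ hw hμ₂_pos hμ hμ₁ hμ₂
    hq him hlt haligned ?_
  rwa [scaledShape_configuration hℓ hw hX hY he]

end Configuration

section ConfigurationAsymptotics

variable {ℓ : ℝ}

theorem continuousAt_relDirection : ContinuousAt relDirection (0, 1, 1, 0) := by
  unfold relDirection
  fun_prop (disch := norm_num)

theorem relDirection_base : relDirection (0, 1, 1, 0) = 1 := by
  simp [relDirection]

theorem continuousAt_one_sub_mul_sq_relDirection (χ : ℝ) :
    ContinuousAt (fun v => 1 - χ * sepRatio v ^ 2 * relDirection v ^ 2 : _ → ℂ) (0, 1, 1, 0) := by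
  have := continuousAt_relDirection
  have := contDiffAt_sepRatio.continuousAt
  fun_prop

theorem continuousAt_halfAngleRotation {ξ : ℂ} (hξ : 0 < ξ.re) :
    ContinuousAt halfAngleRotation ξ := by
  have := Complex.continuous_conj
  unfold halfAngleRotation
  fun_prop (disch := exact mod_cast (norm_add_self_pos hξ).ne')

theorem continuousAt_aligningRotation (χ : ℝ) :
    ContinuousAt (aligningRotation χ) (0, 1, 1, 0) :=
  ContinuousAt.comp (g := halfAngleRotation)
    (continuousAt_halfAngleRotation (by simp [sepRatio]))
    (continuousAt_one_sub_mul_sq_relDirection χ)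

theorem aligningRotation_base (χ : ℝ) : aligningRotation χ (0, 1, 1, 0) = 1 := by
  norm_num [aligningRotation, sepRatio, halfAngleRotation]

theorem tendsto_configuration_zero_div (χ : ℝ) (hℓ : ℓ ≠ 0) :
    Tendsto (fun v => configuration χ ℓ v 0 / (ℓ * v.1)) (𝓝[{v | v.1 ≠ 0}] (0, 1, 1, 0))
      (𝓝 1) := by
  have hcont : ContinuousAt (fun v => (aligningRotation χ v * relDirection v).re / v.2.1)
      (0, 1, 1, 0) := by
    have := continuousAt_aligningRotation χ
    have := continuousAt_relDirection
    fun_prop (disch := norm_num)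
  have hlim := hcont.tendsto.mono_left (nhdsWithin_le_nhds (s := {v | v.1 ≠ 0}))
  simp only [aligningRotation_base, relDirection_base, mul_one, Complex.one_re, div_one] at hlim
  refine hlim.congr' ?_
  filter_upwards [self_mem_nhdsWithin] with v (hv : v.1 ≠ 0)
  simp only [configuration, Matrix.cons_val_zero]
  field_simp

theorem tendsto_configuration_three_div (χ : ℝ) (hℓ : ℓ ≠ 0) :
    Tendsto (fun v => configuration χ ℓ v 3 / ℓ) (𝓝 (0, 1, 1, 0)) (𝓝 1) := by
  have hcont : ContinuousAt (fun v => (aligningRotation χ v).re / v.2.2.1) (0, 1, 1, 0) := by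
    have := continuousAt_aligningRotation χ
    fun_prop (disch := norm_num)
  have hlim := hcont.tendsto
  simp only [aligningRotation_base, Complex.one_re, div_one] at hlim
  refine hlim.congr fun v => ?_
  simp only [configuration, Matrix.cons_val]
  field_simp

theorem relDirection_im_isBigO :
    (fun v => (relDirection v).im) =O[𝓝 (0, 1, 1, 0)] fun v => v.2.2.2 := by
  have hcont : ContinuousAt (fun v : ℝ × ℝ × ℝ × ℝ => 1 / √(v.2.1 ^ 2 + v.2.2.2 ^ 2))
      (0, 1, 1, 0) := by
    fun_prop (disch := norm_num)
  refine ((hcont.tendsto.isBigO_one ℝ).mul (isBigO_refl (fun v => v.2.2.2) _)).congr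
    (fun v => ?_) fun v => one_mul _
  rw [relDirection_im, one_div_mul_eq_div]

theorem aligningRotation_im_isBigO (χ : ℝ) :
    (fun v => (aligningRotation χ v).im) =O[𝓝 (0, 1, 1, 0)] fun v => v.1 ^ 2 * v.2.2.2 := by
  have hξ := continuousAt_one_sub_mul_sq_relDirection χ
  set ξ : ℝ × ℝ × ℝ × ℝ → ℂ := fun v => 1 - χ * sepRatio v ^ 2 * relDirection v ^ 2
  have hcont : ContinuousAt (fun v : ℝ × ℝ × ℝ × ℝ =>
      2 * χ * (v.2.2.1 / v.2.1) ^ 2 * (relDirection v).re / ‖(‖ξ v‖ : ℂ) + ξ v‖) (0, 1, 1, 0) := by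
    have := continuousAt_relDirection
    fun_prop (disch := norm_num [ξ, sepRatio])
  have hξ_im (v : ℝ × ℝ × ℝ × ℝ) :
      -(ξ v).im = 2 * χ * sepRatio v ^ 2 * (relDirection v).re * (relDirection v).im := by
    simp only [ξ, ← Complex.ofReal_pow, ← Complex.ofReal_mul, Complex.sub_im, Complex.one_im,
      Complex.im_ofReal_mul]
    rw [sq (relDirection v), Complex.mul_im]
    ring
  refine ((hcont.tendsto.isBigO_one ℝ).mul
    ((isBigO_refl (fun v : ℝ × ℝ × ℝ × ℝ => v.1 ^ 2) _).mul relDirection_im_isBigO)).congr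
      (fun v => ?_) fun v => one_mul _
  have hz : sepRatio v ^ 2 = (v.2.2.1 / v.2.1) ^ 2 * v.1 ^ 2 := by
    rw [sepRatio]
    ring
  rw [aligningRotation, halfAngleRotation_im, hξ_im, hz]
  ring

theorem configuration_one_isBigO (χ ℓ : ℝ) :
    (fun v => configuration χ ℓ v 1) =O[𝓝 (0, 1, 1, 0)] fun v => v.1 * v.2.2.2 := by
  have he := continuousAt_aligningRotation χ
  have hd := continuousAt_relDirection
  have hw : ContinuousAt (fun v : ℝ × ℝ × ℝ × ℝ => v.1 ^ 2) (0, 1, 1, 0) := by fun_prop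
  have hX : ContinuousAt (fun v : ℝ × ℝ × ℝ × ℝ => ℓ / v.2.1) (0, 1, 1, 0) := by
    fun_prop (disch := norm_num)
  have he_re : ContinuousAt (fun v => (aligningRotation χ v).re) (0, 1, 1, 0) := by fun_prop
  have hd_re : ContinuousAt (fun v => (relDirection v).re) (0, 1, 1, 0) := by fun_prop
  have him : (fun v => (aligningRotation χ v).im) =O[𝓝 (0, 1, 1, 0)] fun v => v.2.2.2 :=
    (aligningRotation_im_isBigO χ).trans <| by
      simpa using (hw.tendsto.isBigO_one ℝ).mul (isBigO_refl (fun v => v.2.2.2) _)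
  have hprod : (fun v => (aligningRotation χ v * relDirection v).im) =O[𝓝 (0, 1, 1, 0)]
      fun v => v.2.2.2 := by
    simp only [Complex.mul_im]
    exact ((he_re.tendsto.isBigO_one ℝ).mul relDirection_im_isBigO).congr_right
      (fun v => one_mul _) |>.add
        ((him.mul (hd_re.tendsto.isBigO_one ℝ)).congr_right fun v => mul_one _)
  refine ((hX.tendsto.isBigO_one ℝ).mul
    ((isBigO_refl (fun v : ℝ × ℝ × ℝ × ℝ => v.1) _).mul hprod)).congr
      (fun v => ?_) fun v => one_mul _
  simp only [configuration, Matrix.cons_val]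
  ring

theorem configuration_two_isBigO (χ ℓ : ℝ) :
    (fun v => configuration χ ℓ v 2) =O[𝓝 (0, 1, 1, 0)] fun v => v.1 ^ 2 * v.2.2.2 := by
  have hY : ContinuousAt (fun v : ℝ × ℝ × ℝ × ℝ => ℓ / v.2.2.1) (0, 1, 1, 0) := by
    fun_prop (disch := norm_num)
  exact ((hY.tendsto.isBigO_one ℝ).mul (aligningRotation_im_isBigO χ)).neg_left.congr
    (fun v => by simp [configuration]) fun v => one_mul _

end ConfigurationAsymptotics

section Family

variable {m₁ m₂ m₃ ν₁ ν₂ ℓ : ℝ}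

theorem perturbation_odd_part_isBigO (χ m₁ m₂ m₃ : ℝ) :
    (fun v => perturbation χ m₁ m₂ m₃ (v.1, v.2.1, v.2.2.1, -v.2.2.2) - perturbation χ m₁ m₂ m₃ v)
      =O[𝓝 (0, 1, 1, 0)] fun v => v.1 ^ 2 * v.2.2.2 :=
  isBigO_odd_part_of_even (contDiffAt_potentialPerturbation m₁ m₂ m₃) (kineticPerturbation_neg χ _)
    (potentialPerturbation_zero_neg m₁ m₂ m₃)

theorem contDiffAt_perturbation (χ m₁ m₂ m₃ : ℝ) :
    ContDiffAt ℝ 2 (perturbation χ m₁ m₂ m₃) (0, 1, 1, 0) :=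
  (contDiffAt_kineticPerturbation χ _).add
    (contDiffAt_fst.mul (contDiffAt_potentialPerturbation m₁ m₂ m₃))

theorem eventually_coordinates_admissible (σ χ : ℝ) :
    ∀ᶠ v : ℝ × ℝ × ℝ × ℝ in 𝓝 (0, 1, 1, 0), 0 < v.2.1 ∧ 0 < v.2.2.1 ∧
      σ * v.1 * v.2.2.1 ^ 2 < v.2.1 ^ 2 ∧ χ * sepRatio v ^ 2 < 1 := by
  have hz := contDiffAt_sepRatio.continuousAt
  have hX : ContinuousAt (fun v : ℝ × ℝ × ℝ × ℝ => v.2.1) (0, 1, 1, 0) := by fun_prop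
  have hY : ContinuousAt (fun v : ℝ × ℝ × ℝ × ℝ => v.2.2.1) (0, 1, 1, 0) := by fun_prop
  have hcone : ContinuousAt (fun v : ℝ × ℝ × ℝ × ℝ => σ * v.1 * v.2.2.1 ^ 2) (0, 1, 1, 0) := by
    fun_prop
  have hb : ContinuousAt (fun v => χ * sepRatio v ^ 2) (0, 1, 1, 0) := by fun_prop
  filter_upwards [hX.eventually_const_lt (u := 0) one_pos,
    hY.eventually_const_lt (u := 0) one_pos,
    hcone.eventually_lt (hX.pow 2) (by norm_num),
    hb.eventually_lt_const (u := 1) (by simp [sepRatio])] with v h₁ h₂ h₃ h₄ using ⟨h₁, h₂, h₃, h₄⟩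

theorem exists_isStrictLocalMin_Hred (hν₁ : 0 < ν₁) (hν₂ : 0 < ν₂) (hm₁ : 0 < m₁) (hm₂ : 0 < m₂)
    (hm₃ : 0 < m₃) (hℓ : 0 < ℓ) :
    ∃ q : ℝ → Fin 4 → ℝ, Tendsto (fun w => q w 0 / (ℓ * w)) (𝓝[>] 0) (𝓝 1) ∧
      Tendsto (fun w => q w 3 / ℓ) (𝓝[>] 0) (𝓝 1) ∧
      ((fun w => q w 1) =O[𝓝[>] 0] fun w => w ^ 5) ∧
      ((fun w => q w 2) =O[𝓝[>] 0] fun w => w ^ 6) ∧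
      ∀ᶠ w in 𝓝[>] 0, ∀ μ₁ μ₂ : ℝ, 0 < μ₂ → μ₂ < μ₁ → μ₁ ^ 2 = ν₂ * ℓ * (m₁ * (m₂ + m₃)) →
        μ₂ ^ 2 = w * ν₁ * ℓ * (m₂ * m₃) →
        IsStrictLocalMin (Hred ν₁ ν₂ μ₁ μ₂ (Vnewt m₁ m₂ m₃)) (q w, 0) := by
  obtain ⟨z, hz, hT, hmin⟩ := exists_isStrictLocalMin_normalForm
    (σ := m₁ * (m₂ + m₃) / (m₂ * m₃)) (by positivity)
    (contDiffAt_perturbation (ν₁ / ν₂) m₁ m₂ m₃) (perturbation_odd_part_isBigO _ _ _ _)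
  have hv : Tendsto (fun w => (w, z w)) (𝓝[>] 0) (𝓝 (0, 1, 1, 0)) :=
    (tendsto_nhds_of_tendsto_nhdsWithin tendsto_id).prodMk_nhds hz
  have hv' : Tendsto (fun w => (w, z w)) (𝓝[>] 0) (𝓝[{v | v.1 ≠ 0}] (0, 1, 1, 0)) :=
    tendsto_nhdsWithin_iff.2 ⟨hv, eventually_mem_nhdsWithin.mono fun w hw => ne_of_gt hw⟩
  refine ⟨fun w => configuration (ν₁ / ν₂) ℓ (w, z w),
    (tendsto_configuration_zero_div _ hℓ.ne').comp hv',
    (tendsto_configuration_three_div _ hℓ.ne').comp hv, ?_, ?_, ?_⟩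
  · refine ((configuration_one_isBigO (ν₁ / ν₂) ℓ).comp_tendsto hv).trans ?_
    exact ((isBigO_refl (fun w => w) _).mul hT).congr_right fun w => by ring
  · refine ((configuration_two_isBigO (ν₁ / ν₂) ℓ).comp_tendsto hv).trans ?_
    exact ((isBigO_refl (fun w => w ^ 2) _).mul hT).congr_right fun w => by ring
  · filter_upwards [hmin, self_mem_nhdsWithin, hv.eventually (eventually_coordinates_admissible
      (m₁ * (m₂ + m₃) / (m₂ * m₃)) (ν₁ / ν₂))]
      with w hw_min hw ⟨hX, hY, hcone, hb⟩ μ₁ μ₂ hμ₂_pos hμ hμ₁ hμ₂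
    exact isStrictLocalMin_Hred_configuration hν₁ hν₂ hm₂ hm₃ hℓ hw hμ₂_pos hμ hμ₁ hμ₂ hX hY
      hcone hb hw_min

theorem sq_outer_angularMomentum_eq {M : ℝ} (μ₁ : ℝ) (hM : M ≠ 0) (hm₁ : m₁ ≠ 0)
    (hm : m₂ + m₃ ≠ 0) :
    μ₁ ^ 2 = m₁ * (m₂ + m₃) / M * (M / (m₁ ^ 2 * (m₂ + m₃) ^ 2) * μ₁ ^ 2) *
      (m₁ * (m₂ + m₃)) := by
  field_simp

theorem sq_inner_angularMomentum_eq {κ μ₁ : ℝ} (μ₂ : ℝ) (hκ : 0 < κ) (hμ₁ : μ₁ ≠ 0) (hm₂ : 0 < m₂)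
    (hm₃ : 0 < m₃) :
    μ₂ ^ 2 = (μ₂ / μ₁ / (m₂ * m₃ * √(κ / (m₂ + m₃)))) ^ 2 * (m₂ * m₃ / (m₂ + m₃)) *
      (κ * μ₁ ^ 2) * (m₂ * m₃) := by
  rw [div_pow, div_pow, mul_pow, Real.sq_sqrt (by positivity)]
  field_simp

theorem tendsto_sq_div_div_nhdsGT_zero {a b : ℝ} (ha : 0 < a) (hb : 0 < b) :
    Tendsto (fun x : ℝ => (x / a / b) ^ 2) (𝓝[>] 0) (𝓝[>] 0) := by
  refine tendsto_nhdsWithin_iff.2 ⟨?_, ?_⟩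
  · have hcont : Continuous fun x : ℝ => (x / a / b) ^ 2 := by fun_prop
    simpa using (hcont.tendsto 0).mono_left nhdsWithin_le_nhds
  · filter_upwards [self_mem_nhdsWithin] with x (hx : 0 < x)
    exact pow_pos (div_pos (div_pos hx ha) hb) 2

end Family

/-- Main theorem: for any masses and small `μ₂ > 0` the fully reduced Hamiltonian has a
zero-momentum critical point which is a strict local minimum (hence the corresponding
relative equilibrium of the three-body problem in `ℝ⁴` is Lyapunov stable), with the
stated asymptotics as `μ₂ → 0⁺`. -/
theorem general_masses_minimum (m₁ m₂ m₃ μ₁ : ℝ) (hm₁ : 0 < m₁)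
    (hm₂ : 0 < m₂) (hm₃ : 0 < m₃) (hμ₁ : 0 < μ₁) :
    (let Mtot := m₁ + m₂ + m₃
     let ν₁ := m₂ * m₃ / (m₂ + m₃)
     let ν₂ := m₁ * (m₂ + m₃) / Mtot
     let κ := Mtot / (m₁ ^ 2 * (m₂ + m₃) ^ 2)
     let u : ℝ → ℝ := fun μ₂ => (μ₂ / μ₁) / (m₂ * m₃ * Real.sqrt (κ / (m₂ + m₃)))
     ∃ ε > 0, ∃ q₁ q₂ q₃ q₄ : ℝ → ℝ,
       Tendsto (fun μ₂ => q₁ μ₂ / (κ * μ₁ ^ 2 * u μ₂ ^ 2)) (𝓝[>] 0) (𝓝 1) ∧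
       Tendsto (fun μ₂ => q₄ μ₂ / (κ * μ₁ ^ 2)) (𝓝[>] 0) (𝓝 1) ∧
       (q₂ =O[𝓝[>] 0] fun μ₂ => u μ₂ ^ 10) ∧
       (q₃ =O[𝓝[>] 0] fun μ₂ => u μ₂ ^ 12) ∧
       ∀ μ₂ ∈ Set.Ioo (0 : ℝ) ε,
         fderiv ℝ (Hred ν₁ ν₂ μ₁ μ₂ (Vnewt m₁ m₂ m₃))
           (![q₁ μ₂, q₂ μ₂, q₃ μ₂, q₄ μ₂], (0 : Fin 4 → ℝ)) = 0 ∧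
         ∀ᶠ z in nhdsWithin ((![q₁ μ₂, q₂ μ₂, q₃ μ₂, q₄ μ₂], (0 : Fin 4 → ℝ)))
             {((![q₁ μ₂, q₂ μ₂, q₃ μ₂, q₄ μ₂], (0 : Fin 4 → ℝ)))}ᶜ,
           Hred ν₁ ν₂ μ₁ μ₂ (Vnewt m₁ m₂ m₃)
               (![q₁ μ₂, q₂ μ₂, q₃ μ₂, q₄ μ₂], (0 : Fin 4 → ℝ)) <
             Hred ν₁ ν₂ μ₁ μ₂ (Vnewt m₁ m₂ m₃) z) := by
  intro Mtot ν₁ ν₂ κ u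
  have hκ : 0 < κ := by positivity
  obtain ⟨q, hq₁, hq₄, hq₂, hq₃, hmin⟩ := exists_isStrictLocalMin_Hred (ν₁ := ν₁) (ν₂ := ν₂)
    (ℓ := κ * μ₁ ^ 2) (by positivity) (by positivity) hm₁ hm₂ hm₃ (by positivity)
  have hu : Tendsto (fun μ₂ => u μ₂ ^ 2) (𝓝[>] 0) (𝓝[>] 0) :=
    tendsto_sq_div_div_nhdsGT_zero hμ₁ (by positivity)
  obtain ⟨ε, hε_pos, hε⟩ := mem_nhdsGT_iff_exists_Ioo_subset.1
    ((hu.eventually hmin).and (nhdsWithin_le_nhds (eventually_lt_nhds hμ₁)))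
  refine ⟨ε, hε_pos, fun μ₂ => q (u μ₂ ^ 2) 0, fun μ₂ => q (u μ₂ ^ 2) 1, fun μ₂ => q (u μ₂ ^ 2) 2,
    fun μ₂ => q (u μ₂ ^ 2) 3, hq₁.comp hu, hq₄.comp hu, ?_, ?_, fun μ₂ hμ₂ => ?_⟩
  · exact (hq₂.comp_tendsto hu).congr_right fun μ₂ => (pow_mul (u μ₂) 2 5).symm
  · exact (hq₃.comp_tendsto hu).congr_right fun μ₂ => (pow_mul (u μ₂) 2 6).symm
  · have hq := (hε hμ₂).1 μ₁ μ₂ hμ₂.1 (hε hμ₂).2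
      (sq_outer_angularMomentum_eq μ₁ (by positivity) hm₁.ne' (by positivity))
      (sq_inner_angularMomentum_eq μ₂ hκ hμ₁.ne' hm₂ hm₃)
    rw [← FinVec.etaExpand_eq (q (u μ₂ ^ 2))] at hq
    exact ⟨hq.isLocalMin.fderiv_eq_zero, hq⟩

end
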